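/- arXiv:0811.2251 — 2 statements merged into one kernel-verified Lean document; each statement's English description precedes it below -/
import Mathlib

section
/- There is a constant C(n) > 0 depending only on n ≥ 2 such that the following holds. Let L ≥ C(n) and let X ⊆ ℝ^n be a finite union of cylinders of radius 1 and length L. Then for each x ∈ X one can choose a centrally symmetric convex body K(x) ⊆ ℝ^n, and set B(x) := x + K(x), so that: (1) B(x) is a symmetric convex body centered at x; (2) Vol(B(x)) ≤ Vol(X) for every x ∈ X; (3) for every cylinder T ⊆ X of radius 1 and length L and every σ > 0, the set of points x ∈ T for which T is NOT contained in the rescaled body x + σ·K(x) has Lebesgue measure at most C(n) σ^{-1} Vol(T). -/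
open MeasureTheory
open scoped ENNReal

/-- The cylinder of radius 1 and length `L` around the segment from `p` to `p + L • v`
(`v` a unit vector): all points within distance 1 of the segment. -/
noncomputable def tube {n : ℕ} (p v : EuclideanSpace ℝ (Fin n)) (L : ℝ) :
    Set (EuclideanSpace ℝ (Fin n)) :=
  {x | Metric.infDist x {y | ∃ t : ℝ, 0 ≤ t ∧ t ≤ L ∧ y = p + t • v} ≤ 1}

/-!
Call a vector-valued map `Φ` *isotropic* on `X` if `∫_X ⟪w, Φ⟫² / ‖Φ‖²` is the same for all unit
vectors `w`, up to a factor. The monomial map of multidegree at most `d` in each variable becomes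
so after a linear change of its target, of dimension `(d + 1) ^ n`: minimise a logarithmic energy
under a determinant constraint. For fixed `y` the correlation
`ρ y z = ⟪Φ y, Φ z⟫² / (‖Φ y‖² ‖Φ z‖²)` then has `z`-integral `≲ Vol X / (d + 1) ^ n`.

If `ρ y z` is small, then the direction of `Φ` has turned between `y` and `z`, and a random
scalar projection of it, suitably saturated, varies by a definite amount on the segment `[y, z]`.
The average size of the derivative of these projections is a continuous field `H` of seminorms.
Along any line each projection is a rational function of degree `O(n d)` and bounded size, hence has
variation `O(n d)` there: the integral of `H` over every line in its own direction is `O(n d)`.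

Let `G` be the integral of `H` over a unit ball in `X`. If `‖v‖ ≤ 1/2` and `G v` is small, then
averaging over `y` forces `ρ y (y + v) ≳ 1` on average, so such `v` fill volume
`≲ Vol X / (d + 1) ^ n`; dilating them by `d / 16` gives the body `K`, whose volume is at most
`Vol X`. Finally a tube `T` in `X` with direction `u` lies in `x + σ • K x` unless `G u` is large at
`x`, and the bound for `H` along lines parallel to `u` makes this rare by Markov's inequality.
-/

theorem volume_zeroLocus_eq_zero {n : ℕ} {p : MvPolynomial (Fin n) ℝ} (hp : p ≠ 0) :
    volume {x : Fin n → ℝ | MvPolynomial.eval x p = 0} = 0 := by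
  induction n with
  | zero =>
    rw [MvPolynomial.eq_C_of_isEmpty p] at hp ⊢
    simp_all
  | succ n ih =>
    let P := MvPolynomial.finSuccEquiv ℝ n p
    have hP : P ≠ 0 := by simpa [P] using hp
    let S : Set (ℝ × (Fin n → ℝ)) := {z | MvPolynomial.eval (Fin.cons z.1 z.2) p = 0}
    have hS : MeasurableSet S := by
      refine (isClosed_eq (p.continuous_eval.comp ?_) continuous_const).measurableSet
      exact Continuous.finCons (A := fun _ => ℝ) continuous_fst continuous_snd
    have hpre : {x : Fin (n + 1) → ℝ | MvPolynomial.eval x p = 0} =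
        MeasurableEquiv.piFinSuccAbove (fun _ => ℝ) 0 ⁻¹' S := by
      ext x
      change _ ↔ MvPolynomial.eval (Fin.cons (x 0) (Fin.tail x)) p = 0
      rw [Fin.cons_self_tail, Set.mem_ofPred_eq]
    rw [hpre, (volume_preserving_piFinSuccAbove _ 0).measure_preimage hS.nullMeasurableSet,
      Measure.volume_eq_prod, Measure.measure_prod_null hS]
    have hfin : {t : ℝ | P.eval (MvPolynomial.C t) = 0}.Finite :=
      (Polynomial.finite_setOfPred_isRoot hP).preimage (MvPolynomial.C_injective _ _).injOn
    filter_upwards [measure_eq_zero_iff_ae_notMem.mp (hfin.measure_zero volume)] with t ht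
    refine (congrArg volume (Set.ext fun s => ?_)).trans (ih ht)
    have heval := Polynomial.eval_map_apply (p := P) (MvPolynomial.eval s) (MvPolynomial.C t)
    rw [MvPolynomial.eval_C] at heval
    simp only [S, Set.mem_preimage, Set.mem_ofPred_eq, MvPolynomial.eval_eq_eval_mv_eval', ← heval,
      P]

section IsotropicPosition

open Module Filter Topology
open scoped InnerProductSpace

variable {F : Type*} [NormedAddCommGroup F] [InnerProductSpace ℝ F]

/-- The rank-one perturbation of the identity that halves the unit vector `v` and fixes its
orthogonal complement. -/
noncomputable def halving (v : F) : F →L[ℝ] F :=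
  ContinuousLinearMap.id ℝ F - (1 / 2 : ℝ) • (innerSL ℝ v).smulRight v

theorem norm_halving_sq {v : F} (hv : ‖v‖ = 1) (y : F) :
    ‖halving v y‖ ^ 2 = ‖y‖ ^ 2 - 3 / 4 * ⟪v, y⟫_ℝ ^ 2 := by
  simp only [halving, sub_apply, ContinuousLinearMap.id_apply,
    smul_apply, ContinuousLinearMap.smulRight_apply, innerSL_apply_apply, smul_smul]
  rw [norm_sub_sq_real, real_inner_smul_right, norm_smul, hv, real_inner_comm v y,
    Real.norm_eq_abs, mul_one, sq_abs]
  ring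

theorem inner_sq_div_norm_sq_le_one {v : F} (hv : ‖v‖ = 1) (y : F) :
    ⟪v, y⟫_ℝ ^ 2 / ‖y‖ ^ 2 ≤ 1 := by
  refine div_le_one_of_le₀ (sq_le_sq.mpr ?_) (by positivity)
  simpa [hv] using abs_real_inner_le_norm v y

theorem log_norm_halving_le {v y : F} (hv : ‖v‖ = 1) (hy : y ≠ 0) :
    Real.log ‖halving v y‖ ≤ Real.log ‖y‖ - 3 / 8 * (⟪v, y⟫_ℝ ^ 2 / ‖y‖ ^ 2) := by
  have : 0 < ‖y‖ := norm_pos_iff.mpr hy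
  set q := ⟪v, y⟫_ℝ ^ 2 / ‖y‖ ^ 2
  have hpos : 0 < 1 - 3 / 4 * q := by linarith [inner_sq_div_norm_sq_le_one hv y]
  have hsq : ‖halving v y‖ ^ 2 = ‖y‖ ^ 2 * (1 - 3 / 4 * q) := by
    rw [norm_halving_sq hv]
    simp only [q]
    field_simp
  have hlog := congrArg Real.log hsq
  rw [Real.log_mul (by positivity) hpos.ne', Real.log_pow, Real.log_pow] at hlog
  push_cast at hlog
  linarith [Real.log_le_sub_one_of_pos hpos]

theorem exists_measureReal_slab_le_of_mem_ball [MeasurableSpace F] [BorelSpace F]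
    {ν : Measure F} [IsFiniteMeasure ν] {v₀ : F}
    (hν : ν {y | ⟪v₀, y⟫_ℝ = 0} = 0) {τ : ℝ} (hτ : 0 < τ) :
    ∃ δ > 0, ∀ v ∈ Metric.ball v₀ δ, ν.real {y | |⟪v, y⟫_ℝ| < δ * ‖y‖} ≤ τ := by
  let S : ℕ → Set F := fun k => {y | |⟪v₀, y⟫_ℝ| ≤ 2 * (1 / ((k : ℝ) + 1)) * ‖y‖}
  have hS0 : ν (⋂ k, S k) = 0 := by
    refine measure_mono_null (fun y hy => ?_) hν
    have hlim := ((tendsto_one_div_add_atTop_nhds_zero_nat (𝕜 := ℝ)).const_mul 2).mul_const ‖y‖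
    simpa using ge_of_tendsto' hlim (Set.mem_iInter.mp hy)
  have hlim : Tendsto (fun k => ν (S k)) atTop (𝓝 0) := by
    rw [← hS0]
    refine tendsto_measure_iInter_atTop (fun k => ?_) (fun k l hkl y hy => ?_)
      ⟨0, measure_ne_top _ _⟩
    · exact (isClosed_le (by fun_prop) (by fun_prop)).nullMeasurableSet
    · have := Nat.one_div_le_one_div (α := ℝ) hkl
      refine (Set.mem_ofPred_eq ▸ hy : |⟪v₀, y⟫_ℝ| ≤ _).trans ?_
      gcongr
  obtain ⟨k, hk⟩ := (hlim.eventually (gt_mem_nhds (ENNReal.ofReal_pos.mpr hτ))).exists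
  refine ⟨1 / (k + 1), by positivity, fun v hv => ?_⟩
  refine ENNReal.toReal_le_of_le_ofReal hτ.le ((measure_mono fun y hy => ?_).trans hk.le)
  have hdiff : |⟪v₀ - v, y⟫_ℝ| ≤ 1 / (k + 1) * ‖y‖ :=
    (abs_real_inner_le_norm _ _).trans (by gcongr; exact (mem_ball_iff_norm'.mp hv).le)
  have hsplit : ⟪v₀, y⟫_ℝ = ⟪v₀ - v, y⟫_ℝ + ⟪v, y⟫_ℝ := by rw [inner_sub_left]; ring
  simp only [S, Set.mem_ofPred_eq] at hy ⊢
  rw [hsplit]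
  linarith [abs_add_le ⟪v₀ - v, y⟫_ℝ ⟪v, y⟫_ℝ]

variable [FiniteDimensional ℝ F]

theorem abs_det_mul_norm_le (B : F →L[ℝ] F) (y : F) :
    |B.det| * ‖y‖ ≤ ‖B‖ ^ (finrank ℝ F - 1) * ‖B y‖ := by
  rcases eq_or_ne y 0 with rfl | hy
  · simp
  have : Nontrivial F := ⟨y, 0, hy⟩
  obtain ⟨k, hk⟩ := Nat.exists_eq_add_one_of_ne_zero (finrank_pos (R := ℝ) (M := F)).ne'
  have : Fact (finrank ℝ F = k + 1) := ⟨hk⟩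
  obtain ⟨b, hb⟩ : ∃ b : OrthonormalBasis (Fin (k + 1)) ℝ F, b 0 = ‖y‖⁻¹ • y := by
    have horth : Orthonormal ℝ (({0} : Set (Fin (k + 1))).domRestrict fun _ => ‖y‖⁻¹ • y) := by
      refine ⟨fun _ => norm_smul_inv_norm hy, fun i j hij => absurd (Subsingleton.elim i j) hij⟩
    obtain ⟨b, hb⟩ := horth.exists_orthonormalBasis_extension_of_card_eq (by simpa using hk)
    exact ⟨b, hb 0 rfl⟩
  have hdet : |B.det| = |b.toBasis.orientation.volumeForm fun i => B (b i)| := by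
    have h := b.toBasis.det_comp (B : F →ₗ[ℝ] F) b
    rw [← b.coe_toBasis, Basis.det_self, mul_one] at h
    rw [Orientation.volumeForm_robust' _ b]
    exact congrArg abs h.symm
  have hrest : ∏ i : Fin k, ‖B (b i.succ)‖ ≤ ‖B‖ ^ k := by
    refine (Finset.prod_le_prod (fun _ _ => norm_nonneg _) (g := fun _ => ‖B‖)
      fun i _ => ?_).trans_eq (by simp)
    simpa using B.le_opNorm (b i.succ)
  have h0 : ‖B (b 0)‖ * ‖y‖ = ‖B y‖ := by
    rw [hb, map_smul, norm_smul, norm_inv, norm_norm]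
    field_simp
  calc |B.det| * ‖y‖ ≤ (‖B (b 0)‖ * ∏ i : Fin k, ‖B (b i.succ)‖) * ‖y‖ := by
        rw [hdet, ← Fin.prod_univ_succ fun i => ‖B (b i)‖]
        gcongr
        exact Orientation.abs_volumeForm_apply_le _ _
    _ ≤ (‖B (b 0)‖ * ‖B‖ ^ k) * ‖y‖ := by gcongr
    _ = ‖B‖ ^ (finrank ℝ F - 1) * ‖B y‖ := by rw [hk, Nat.add_sub_cancel, ← h0]; ring

theorem abs_det_le_norm_pow_mul_div {B : F →L[ℝ] F} {y : F} (hy : y ≠ 0) :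
    |B.det| ≤ ‖B‖ ^ (finrank ℝ F - 1) * (‖B y‖ / ‖y‖) := by
  rw [← mul_div_assoc, le_div_iff₀ (norm_pos_iff.mpr hy)]
  exact abs_det_mul_norm_le B y

theorem injective_of_det_ne_zero {B : F →L[ℝ] F} (hB : B.det ≠ 0) : Function.Injective B :=
  LinearMap.ker_eq_bot.mp
    (not_not.mp (mt (LinearMap.det_eq_zero_iff_ker_ne_bot (f := (B : F →ₗ[ℝ] F))).mpr hB))

theorem exists_forall_half_mul_norm_le {B : F →L[ℝ] F} (hB : ‖B‖ = 1) :
    ∃ w, ∀ δ y, 0 ≤ δ → δ * (‖w‖ * ‖y‖) ≤ |⟪w, y⟫_ℝ| → δ / 2 * ‖y‖ ≤ ‖B y‖ := by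
  obtain ⟨v, hv, hBv⟩ : ∃ v, ‖v‖ < 1 ∧ 1 / 2 < ‖B.adjoint v‖ := by
    apply ContinuousLinearMap.exists_lt_apply_of_lt_opNorm
    rw [LinearIsometryEquiv.norm_map, hB]
    norm_num
  refine ⟨B.adjoint v, fun δ y hδ hy => ?_⟩
  calc δ / 2 * ‖y‖ = δ * (1 / 2 * ‖y‖) := by ring
    _ ≤ δ * (‖B.adjoint v‖ * ‖y‖) := by gcongr
    _ ≤ |⟪v, B y⟫_ℝ| := by rwa [← ContinuousLinearMap.adjoint_inner_left]
    _ ≤ ‖v‖ * ‖B y‖ := abs_real_inner_le_norm v (B y)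
    _ ≤ ‖B y‖ := mul_le_of_le_one_left (norm_nonneg _) hv.le

theorem det_halving {v : F} (hv : ‖v‖ = 1) : (halving v).det = 1 / 2 := by
  have h := LinearMap.transvection.det (innerₛₗ ℝ v) (-(1 / 2 : ℝ) • v)
  rw [map_smul, innerₛₗ_apply_apply, real_inner_self_eq_norm_sq, hv] at h
  convert h using 1
  · refine congrArg _ (LinearMap.ext fun y => ?_)
    simp [halving, LinearMap.transvection.apply, smul_smul, mul_comm, sub_eq_add_neg]
  · norm_num

variable [MeasurableSpace F] [BorelSpace F]

theorem exists_forall_measureReal_slab_le {ν : Measure F} [IsFiniteMeasure ν]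
    (hν : ∀ v ≠ 0, ν {y | ⟪v, y⟫_ℝ = 0} = 0) {τ : ℝ} (hτ : 0 < τ) :
    ∃ δ > 0, ∀ v, ν.real {y | |⟪v, y⟫_ℝ| < δ * (‖v‖ * ‖y‖)} ≤ τ := by
  have hmono {v : F} {a b : ℝ} (hab : a ≤ b) :
      ν.real {y | |⟪v, y⟫_ℝ| < a * ‖y‖} ≤ ν.real {y | |⟪v, y⟫_ℝ| < b * ‖y‖} := by
    refine measureReal_mono fun y hy => ?_
    simp only [Set.mem_ofPred_eq] at hy ⊢
    exact hy.trans_le (by gcongr)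
  obtain ⟨δ, hδ, h⟩ : ∃ δ > 0, ∀ v ∈ Metric.sphere (0 : F) 1,
      ν.real {y | |⟪v, y⟫_ℝ| < δ * ‖y‖} ≤ τ := by
    refine (isCompact_sphere (0 : F) 1).induction_on
      (p := fun s => ∃ δ > 0, ∀ v ∈ s, ν.real {y | |⟪v, y⟫_ℝ| < δ * ‖y‖} ≤ τ)
      ⟨1, one_pos, by simp⟩ (fun s t hst ⟨δ, hδ, h⟩ => ⟨δ, hδ, fun v hv => h v (hst hv)⟩) ?_ ?_
    · rintro s t ⟨δ, hδ, h⟩ ⟨δ', hδ', h'⟩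
      exact ⟨min δ δ', lt_min hδ hδ', fun v hv => hv.elim
        (fun hv => (hmono (min_le_left _ _)).trans (h v hv))
        (fun hv => (hmono (min_le_right _ _)).trans (h' v hv))⟩
    · intro v₀ hv₀
      obtain ⟨δ, hδ, h⟩ := exists_measureReal_slab_le_of_mem_ball
        (hν v₀ (ne_zero_of_mem_unit_sphere ⟨v₀, hv₀⟩)) hτ
      exact ⟨_, mem_nhdsWithin_of_mem_nhds (Metric.ball_mem_nhds v₀ hδ), δ, hδ, h⟩
  refine ⟨δ, hδ, fun v => ?_⟩
  rcases eq_or_ne v 0 with rfl | hv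
  · simpa using hτ.le
  have hv' : 0 < ‖v‖ := norm_pos_iff.mpr hv
  refine (measureReal_mono fun y hy => ?_).trans (h (‖v‖⁻¹ • v) (by simp [norm_smul, hv]))
  rw [Set.mem_ofPred_eq, real_inner_smul_left, abs_mul, abs_inv, abs_norm, inv_mul_lt_iff₀ hv']
  exact lt_of_lt_of_eq hy (by ring)

/-- A scale-invariant functional whose near-minimisers over invertible `B` put `ν` in approximately
isotropic position: the mean logarithmic stretch of `B`, normalised by the determinant. -/
noncomputable def logStretch (ν : Measure F) (B : F →L[ℝ] F) : ℝ :=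
  ∫ y, Real.log (‖B y‖ / ‖y‖) ∂ν - ν.real Set.univ / finrank ℝ F * Real.log |B.det|

theorem integrable_log_stretch (ν : Measure F) [IsFiniteMeasure ν] {B : F →L[ℝ] F}
    (hB : B.det ≠ 0) : Integrable (fun y => Real.log (‖B y‖ / ‖y‖)) ν := by
  rcases subsingleton_or_nontrivial F with _ | _
  · refine (integrable_const 0).congr (.of_forall fun y => ?_)
    simp [Subsingleton.elim y 0]
  have hBpos : 0 < ‖B‖ := norm_pos_iff.mpr fun h => by
    obtain ⟨y, hy⟩ := exists_ne (0 : F)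
    exact hy (injective_of_det_ne_zero hB (by simp [h]))
  set m := |B.det| / ‖B‖ ^ (finrank ℝ F - 1)
  have hm : 0 < m := by positivity
  refine .of_bound (Measurable.aestronglyMeasurable (by fun_prop))
    (|Real.log m| + |Real.log ‖B‖|) (.of_forall fun y => ?_)
  rcases eq_or_ne y 0 with rfl | hy
  · simpa using by positivity
  have hlow : m ≤ ‖B y‖ / ‖y‖ :=
    (div_le_iff₀' (by positivity)).mpr (abs_det_le_norm_pow_mul_div hy)
  have h₁ := Real.log_le_log hm hlow
  have h₂ := Real.log_le_log (hm.trans_le hlow) (B.ratio_le_opNorm y)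
  rw [Real.norm_eq_abs, abs_le]
  constructor <;> linarith [neg_abs_le (Real.log m), abs_nonneg (Real.log m),
    le_abs_self (Real.log ‖B‖), abs_nonneg (Real.log ‖B‖)]

theorem logStretch_smul (ν : Measure F) [IsFiniteMeasure ν] (hν : ν {0} = 0) {B : F →L[ℝ] F}
    (hB : B.det ≠ 0) {c : ℝ} (hc : 0 < c) : logStretch ν (c • B) = logStretch ν B := by
  rcases subsingleton_or_nontrivial F with _ | _
  · simp [Subsingleton.elim (c • B) B]
  have hlog : ∀ᵐ y ∂ν, Real.log (‖(c • B) y‖ / ‖y‖) = Real.log c + Real.log (‖B y‖ / ‖y‖) := by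
    filter_upwards [measure_eq_zero_iff_ae_notMem.mp hν] with y hy
    have hBy : B y ≠ 0 := (map_ne_zero_iff _ (injective_of_det_ne_zero hB)).mpr hy
    rw [← Real.log_mul hc.ne' (by simp_all), smul_apply, norm_smul,
      Real.norm_of_nonneg hc.le, mul_div_assoc]
  have hdet : (c • B).det = c ^ finrank ℝ F * B.det := LinearMap.det_smul c (B : F →ₗ[ℝ] F)
  have hD : (finrank ℝ F : ℝ) ≠ 0 := by exact_mod_cast finrank_pos.ne'
  simp only [logStretch]
  rw [integral_congr_ae hlog, integral_add (integrable_const _) (integrable_log_stretch ν hB),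
    integral_const, hdet, abs_mul, abs_of_pos (pow_pos hc _),
    Real.log_mul (by positivity) (by positivity), Real.log_pow, smul_eq_mul]
  field_simp
  ring

theorem exists_le_logStretch [Nontrivial F] (ν : Measure F) [IsFiniteMeasure ν] [NeZero ν]
    (hν : ∀ v ≠ 0, ν {y | ⟪v, y⟫_ℝ = 0} = 0) :
    ∃ m, ∀ B : F →L[ℝ] F, B.det ≠ 0 → ‖B‖ = 1 → m ≤ logStretch ν B := by
  have hD : (0 : ℝ) < finrank ℝ F := by exact_mod_cast finrank_pos
  have hN : 0 < ν.real Set.univ := measureReal_univ_pos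
  obtain ⟨δ, hδ, hslab⟩ := exists_forall_measureReal_slab_le hν (div_pos hN hD)
  refine ⟨ν.real Set.univ * Real.log (min 1 (δ / 2)), fun B hB hB1 => ?_⟩
  obtain ⟨w, hw⟩ := exists_forall_half_mul_norm_le hB1
  let S : Set F := {y | |⟪w, y⟫_ℝ| < δ * (‖w‖ * ‖y‖)}
  have hS : MeasurableSet S := (isOpen_lt (by fun_prop) (by fun_prop)).measurableSet
  have hdet1 : ∀ y ≠ 0, |B.det| ≤ ‖B y‖ / ‖y‖ := fun y hy => by
    simpa [hB1] using abs_det_le_norm_pow_mul_div (B := B) hy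
  have hlogdet : Real.log |B.det| ≤ 0 := by
    obtain ⟨y, hy⟩ := exists_ne (0 : F)
    exact Real.log_nonpos (abs_nonneg _) (((hdet1 y hy).trans (B.ratio_le_opNorm y)).trans hB1.le)
  have hlogδ : Real.log (min 1 (δ / 2)) ≤ 0 := Real.log_nonpos (by positivity) (min_le_left _ _)
  have hpt : ∀ y, Real.log (min 1 (δ / 2)) + S.indicator (fun _ => Real.log |B.det|) y
      ≤ Real.log (‖B y‖ / ‖y‖) := fun y => by
    rcases eq_or_ne y 0 with rfl | hy
    · simpa [S] using hlogδ
    by_cases hyS : y ∈ S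
    · rw [Set.indicator_of_mem hyS]
      linarith [Real.log_le_log (by positivity) (hdet1 y hy)]
    · rw [Set.indicator_of_notMem hyS, add_zero]
      refine Real.log_le_log (by positivity) ((min_le_right _ _).trans ?_)
      exact (le_div_iff₀ (norm_pos_iff.mpr hy)).mpr (hw δ y hδ.le (not_lt.mp hyS))
  have hintS : Integrable (S.indicator fun _ => Real.log |B.det|) ν :=
    (integrable_const _).indicator hS
  have hint := integral_mono ((integrable_const _).add hintS) (integrable_log_stretch ν hB) hpt
  simp only [Pi.add_apply] at hint
  rw [integral_add (integrable_const _) hintS, integral_indicator_const _ hS, integral_const,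
    smul_eq_mul, smul_eq_mul] at hint
  have := mul_le_mul_of_nonpos_right (hslab w) hlogdet
  rw [logStretch]
  linarith

theorem bddBelow_logStretch [Nontrivial F] (ν : Measure F) [IsFiniteMeasure ν] [NeZero ν]
    (hν : ∀ v ≠ 0, ν {y | ⟪v, y⟫_ℝ = 0} = 0) :
    BddBelow (logStretch ν '' {B | B.det ≠ 0}) := by
  obtain ⟨m, hm⟩ := exists_le_logStretch ν hν
  refine ⟨m, ?_⟩
  rintro _ ⟨B, hB : B.det ≠ 0, rfl⟩
  have hν0 : ν {0} = 0 := by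
    obtain ⟨v, hv⟩ := exists_ne (0 : F)
    exact measure_mono_null (by simp) (hν v hv)
  have hB0 : B ≠ 0 := fun h => by
    obtain ⟨y, hy⟩ := exists_ne (0 : F)
    exact hy (injective_of_det_ne_zero hB (by simp [h]))
  have hc : 0 < ‖B‖⁻¹ := by positivity
  rw [← logStretch_smul ν hν0 hB hc]
  refine hm _ ?_ (by simp [norm_smul, hB0])
  exact (LinearMap.det_smul ‖B‖⁻¹ (B : F →ₗ[ℝ] F)).trans_ne (by positivity)

theorem logStretch_halving_comp_le {ν : Measure F} [IsFiniteMeasure ν] {B : F →L[ℝ] F}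
    (hB : B.det ≠ 0) {v : F} (hv : ‖v‖ = 1) :
    logStretch ν (halving v ∘L B) ≤ logStretch ν B
      - 3 / 8 * ∫ y, ⟪v, B y⟫_ℝ ^ 2 / ‖B y‖ ^ 2 ∂ν
      + ν.real Set.univ / finrank ℝ F * Real.log 2 := by
  have hdet : (halving v ∘L B).det = 1 / 2 * B.det := by
    rw [← det_halving hv]
    exact LinearMap.det_comp _ _
  have hdet0 : (halving v ∘L B).det ≠ 0 := by simpa [hdet] using hB
  have hpt : ∀ y, Real.log (‖(halving v ∘L B) y‖ / ‖y‖) ≤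
      Real.log (‖B y‖ / ‖y‖) - 3 / 8 * (⟪v, B y⟫_ℝ ^ 2 / ‖B y‖ ^ 2) := fun y => by
    rcases eq_or_ne y 0 with rfl | hy
    · simp
    have hy' : ‖y‖ ≠ 0 := norm_ne_zero_iff.mpr hy
    have hBy : B y ≠ 0 := (map_ne_zero_iff B (injective_of_det_ne_zero hB)).mpr hy
    have hBy' : halving v (B y) ≠ 0 :=
      (map_ne_zero_iff (halving v ∘L B) (injective_of_det_ne_zero hdet0)).mpr hy
    rw [ContinuousLinearMap.comp_apply, Real.log_div (norm_ne_zero_iff.mpr hBy) hy',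
      Real.log_div (norm_ne_zero_iff.mpr hBy') hy']
    linarith [log_norm_halving_le hv hBy]
  have hqint : Integrable (fun y => ⟪v, B y⟫_ℝ ^ 2 / ‖B y‖ ^ 2) ν :=
    .of_bound (Measurable.aestronglyMeasurable (by fun_prop)) 1 (.of_forall fun y => by
      rw [Real.norm_of_nonneg (by positivity)]
      exact inner_sq_div_norm_sq_le_one hv (B y))
  have hint := integral_mono (integrable_log_stretch ν hdet0)
    ((integrable_log_stretch ν hB).sub (hqint.const_mul (3 / 8))) hpt
  rw [integral_sub' (integrable_log_stretch ν hB) (hqint.const_mul (3 / 8)),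
    integral_const_mul] at hint
  have hlog : Real.log |(halving v ∘L B).det| = Real.log |B.det| - Real.log 2 := by
    rw [hdet, abs_mul, Real.log_mul (by norm_num) (by positivity), abs_of_pos (by norm_num),
      one_div, Real.log_inv]
    ring
  rw [logStretch, logStretch, hlog]
  linarith

theorem exists_injective_integral_inner_sq_div_le [Nontrivial F] (ν : Measure F) [IsFiniteMeasure ν]
    (hν : ∀ v ≠ 0, ν {y | ⟪v, y⟫_ℝ = 0} = 0) :
    ∃ B : F →L[ℝ] F, Function.Injective B ∧ ∀ v, ‖v‖ = 1 →
      ∫ y, ⟪v, B y⟫_ℝ ^ 2 / ‖B y‖ ^ 2 ∂ν ≤ 4 * ν.real Set.univ / finrank ℝ F := by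
  rcases eq_zero_or_neZero ν with rfl | _
  · exact ⟨.id ℝ F, Function.injective_id, by simp⟩
  set η := ν.real Set.univ / finrank ℝ F with hη
  have hηpos : 0 < η := div_pos measureReal_univ_pos (by exact_mod_cast finrank_pos)
  obtain ⟨_, ⟨B, hB, rfl⟩, hmin⟩ := exists_lt_of_csInf_lt
    (Set.Nonempty.image (logStretch ν) ⟨.id ℝ F, by simp [ContinuousLinearMap.det]⟩)
    (lt_add_of_pos_right (sInf (logStretch ν '' {B | B.det ≠ 0})) (half_pos hηpos))
  refine ⟨B, injective_of_det_ne_zero hB, fun v hv => ?_⟩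
  have hdet : (halving v ∘L B).det ≠ 0 := by
    refine (LinearMap.det_comp _ _).trans_ne (mul_ne_zero ?_ hB)
    exact (det_halving hv).trans_ne (by norm_num)
  have hinf := csInf_le (bddBelow_logStretch ν hν) ⟨_, hdet, rfl⟩
  have hdrop := logStretch_halving_comp_le (ν := ν) hB hv
  rw [← hη] at hdrop
  rw [mul_div_assoc, ← hη]
  nlinarith [Real.log_two_lt_d9]

end IsotropicPosition

section RandomVector

open Module Finset
open scoped InnerProductSpace BigOperators

/-- A uniformly random element of `Fin 6` is turned into a symmetric random variable with second
and fourth moment `1 / 3`. As for a Gaussian, the fourth moment is three times the square of the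
second one, which makes the fourth moments of `randomVector` rotation invariant. -/
def noise : Fin 6 → ℝ := ![0, 0, 0, 0, 1, -1]

theorem expect_noise_mul_add_pow_two (x r : ℝ) :
    𝔼 k, (noise k * x + r) ^ 2 = r ^ 2 + x ^ 2 / 3 := by
  simp only [Fintype.expect_eq_sum_div_card, Fin.sum_univ_six, noise, Fintype.card_fin]
  simp
  ring

theorem expect_noise_mul_add_pow_four (x r : ℝ) :
    𝔼 k, (noise k * x + r) ^ 4 = r ^ 4 + 2 * x ^ 2 * r ^ 2 + x ^ 4 / 3 := by
  simp only [Fintype.expect_eq_sum_div_card, Fin.sum_univ_six, noise, Fintype.card_fin]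
  simp
  ring

theorem expect_noise_mul_add_pow_six (x r : ℝ) :
    𝔼 k, (noise k * x + r) ^ 6 = r ^ 6 + 5 * x ^ 2 * r ^ 4 + 5 * x ^ 4 * r ^ 2 + x ^ 6 / 3 := by
  simp only [Fintype.expect_eq_sum_div_card, Fin.sum_univ_six, noise, Fintype.card_fin]
  simp
  ring

theorem expect_sum_noise_mul_pow_succ {D : ℕ} (a : Fin (D + 1) → ℝ) (p : ℕ) :
    𝔼 ω : Fin (D + 1) → Fin 6, (∑ i, noise (ω i) * a i) ^ p =
      𝔼 ω : Fin D → Fin 6, 𝔼 k, (noise k * a 0 + ∑ i, noise (ω i) * a i.succ) ^ p := by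
  rw [Finset.expect_comm, ← Finset.expect_product', Finset.univ_product_univ]
  refine (Fintype.expect_equiv (Fin.consEquiv fun _ => Fin 6) _ _ fun z => ?_).symm
  simp [Fin.sum_univ_succ, Fin.consEquiv]

theorem expect_sum_noise_mul_pow_two {D : ℕ} (a : Fin D → ℝ) :
    𝔼 ω : Fin D → Fin 6, (∑ i, noise (ω i) * a i) ^ 2 = (∑ i, a i ^ 2) / 3 := by
  induction D with
  | zero => simp
  | succ D ih =>
    rw [expect_sum_noise_mul_pow_succ, Fin.sum_univ_succ]
    simp only [expect_noise_mul_add_pow_two, Finset.expect_add_distrib,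
      Fintype.expect_const, ih fun i => a i.succ]
    ring

theorem expect_sum_noise_mul_pow_four {D : ℕ} (a : Fin D → ℝ) :
    𝔼 ω : Fin D → Fin 6, (∑ i, noise (ω i) * a i) ^ 4 = (∑ i, a i ^ 2) ^ 2 / 3 := by
  induction D with
  | zero => simp
  | succ D ih =>
    rw [expect_sum_noise_mul_pow_succ, Fin.sum_univ_succ]
    simp only [expect_noise_mul_add_pow_four, Finset.expect_add_distrib, ← Finset.mul_expect,
      Fintype.expect_const, ih fun i => a i.succ, expect_sum_noise_mul_pow_two fun i => a i.succ]
    ring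

theorem expect_sum_noise_mul_pow_six_le {D : ℕ} (a : Fin D → ℝ) :
    𝔼 ω : Fin D → Fin 6, (∑ i, noise (ω i) * a i) ^ 6 ≤ 5 / 9 * (∑ i, a i ^ 2) ^ 3 := by
  induction D with
  | zero => simp
  | succ D ih =>
    rw [expect_sum_noise_mul_pow_succ, Fin.sum_univ_succ]
    simp only [expect_noise_mul_add_pow_six, Finset.expect_add_distrib, ← Finset.mul_expect,
      Fintype.expect_const, expect_sum_noise_mul_pow_two fun i => a i.succ,
      expect_sum_noise_mul_pow_four fun i => a i.succ]
    have : 0 ≤ a 0 ^ 6 := by positivity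
    linarith [ih fun i => a i.succ]

variable {F : Type*} [NormedAddCommGroup F] [InnerProductSpace ℝ F] [FiniteDimensional ℝ F]

variable (F) in
/-- A vector of `F` with independent `noise` coordinates; averages over all `ω` play the role of
expectations. -/
noncomputable def randomVector (ω : Fin (finrank ℝ F) → Fin 6) : F :=
  ∑ i, noise (ω i) • stdOrthonormalBasis ℝ F i

theorem inner_randomVector (ω : Fin (finrank ℝ F) → Fin 6) (a : F) :
    ⟪randomVector F ω, a⟫_ℝ = ∑ i, noise (ω i) * ⟪stdOrthonormalBasis ℝ F i, a⟫_ℝ := by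
  simp [randomVector, sum_inner, real_inner_smul_left]

theorem expect_inner_randomVector_pow_four (a : F) :
    𝔼 ω, ⟪randomVector F ω, a⟫_ℝ ^ 4 = ‖a‖ ^ 4 / 3 := by
  simp only [inner_randomVector]
  rw [expect_sum_noise_mul_pow_four, OrthonormalBasis.sum_sq_inner_right]
  ring

theorem expect_inner_randomVector_pow_six_le (a : F) :
    𝔼 ω, ⟪randomVector F ω, a⟫_ℝ ^ 6 ≤ 5 / 9 * ‖a‖ ^ 6 := by
  simp only [inner_randomVector]
  refine (expect_sum_noise_mul_pow_six_le _).trans_eq ?_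
  rw [OrthonormalBasis.sum_sq_inner_right]
  ring

theorem expect_sq_sub_sq_sq {a b : F} (ha : ‖a‖ = 1) (hb : ‖b‖ = 1) :
    𝔼 ω, (⟪randomVector F ω, a⟫_ℝ ^ 2 - ⟪randomVector F ω, b⟫_ℝ ^ 2) ^ 2 =
      4 / 9 * (1 - ⟪a, b⟫_ℝ ^ 2) := by
  -- Polarisation: `6 (x² - y²)² = 8 x⁴ + 8 y⁴ - (x + y)⁴ - (x - y)⁴`.
  have hpol : ∀ ω, (⟪randomVector F ω, a⟫_ℝ ^ 2 - ⟪randomVector F ω, b⟫_ℝ ^ 2) ^ 2 =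
      4 / 3 * ⟪randomVector F ω, a⟫_ℝ ^ 4 + 4 / 3 * ⟪randomVector F ω, b⟫_ℝ ^ 4 -
        (1 / 6 * ⟪randomVector F ω, a + b⟫_ℝ ^ 4 + 1 / 6 * ⟪randomVector F ω, a - b⟫_ℝ ^ 4) := by
    intro ω
    rw [inner_add_right, inner_sub_right]
    ring
  have hadd : ‖a + b‖ ^ 4 = (2 + 2 * ⟪a, b⟫_ℝ) ^ 2 := by
    rw [pow_mul (‖a + b‖) 2 2, norm_add_sq_real, ha, hb]; ring
  have hsub : ‖a - b‖ ^ 4 = (2 - 2 * ⟪a, b⟫_ℝ) ^ 2 := by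
    rw [pow_mul (‖a - b‖) 2 2, norm_sub_sq_real, ha, hb]; ring
  simp only [hpol, Finset.expect_sub_distrib, Finset.expect_add_distrib, ← Finset.mul_expect,
    expect_inner_randomVector_pow_four, ha, hb, hadd, hsub]
  ring

theorem sub_sq_le_add_abs_saturation_sub {x y : ℝ} (hx : 0 ≤ x) (hy : 0 ≤ y) :
    (x - y) ^ 2 ≤ (x + y) ^ 3 / 20 + 2420 * |x / (1 + x) - y / (1 + y)| := by
  rcases le_total (x + y) 20 with h | h
  · have hdiff : |x - y| = (1 + x) * (1 + y) * |x / (1 + x) - y / (1 + y)| := by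
      rw [← abs_of_nonneg (by positivity : 0 ≤ (1 + x) * (1 + y)), ← abs_mul]
      congr 1
      field_simp
      ring
    have hprod : (1 + x) * (1 + y) ≤ 121 := by nlinarith [sq_nonneg (x - y)]
    have habs : |x - y| ≤ 20 := abs_le.mpr ⟨by linarith, by linarith⟩
    calc (x - y) ^ 2 = |x - y| * |x - y| := by rw [← sq, sq_abs]
      _ ≤ 20 * (121 * |x / (1 + x) - y / (1 + y)|) := by
        gcongr
        rw [hdiff]
        gcongr
      _ ≤ _ := by linarith [pow_nonneg (add_nonneg hx hy) 3]
  · have : 0 ≤ (x + y) ^ 2 * (x + y - 20) := mul_nonneg (sq_nonneg _) (by linarith)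
    nlinarith [mul_nonneg hx hy, abs_nonneg (x / (1 + x) - y / (1 + y))]

theorem one_le_inner_sq_add_expect_abs_sub {a b : F} (ha : ‖a‖ = 1) (hb : ‖b‖ = 1) :
    1 ≤ 2 * ⟪a, b⟫_ℝ ^ 2 + 10890 * 𝔼 ω,
      |⟪randomVector F ω, a⟫_ℝ ^ 2 / (1 + ⟪randomVector F ω, a⟫_ℝ ^ 2) -
        ⟪randomVector F ω, b⟫_ℝ ^ 2 / (1 + ⟪randomVector F ω, b⟫_ℝ ^ 2)| := by
  have hsixth : 𝔼 ω, (⟪randomVector F ω, a⟫_ℝ ^ 2 + ⟪randomVector F ω, b⟫_ℝ ^ 2) ^ 3 ≤ 40 / 9 := by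
    calc _ ≤ 𝔼 ω, (4 * ⟪randomVector F ω, a⟫_ℝ ^ 6 + 4 * ⟪randomVector F ω, b⟫_ℝ ^ 6) := by
          refine Finset.expect_le_expect fun ω _ => ?_
          refine (add_pow_le (sq_nonneg _) (sq_nonneg _) 3).trans_eq ?_
          ring
      _ ≤ 40 / 9 := by
          rw [Finset.expect_add_distrib, ← Finset.mul_expect, ← Finset.mul_expect]
          have h₁ := expect_inner_randomVector_pow_six_le a
          have h₂ := expect_inner_randomVector_pow_six_le b
          rw [ha] at h₁
          rw [hb] at h₂
          linarith
  have hmean := Finset.expect_le_expect (s := univ) fun ω _ =>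
    sub_sq_le_add_abs_saturation_sub (sq_nonneg ⟪randomVector F ω, a⟫_ℝ)
      (sq_nonneg ⟪randomVector F ω, b⟫_ℝ)
  rw [expect_sq_sub_sq_sq ha hb, Finset.expect_add_distrib, ← Finset.mul_expect,
    ← Finset.expect_div] at hmean
  linarith

end RandomVector

section Variation

open Polynomial

theorem integral_abs_deriv_eq_abs_sub {f f' : ℝ → ℝ} (hf : ∀ t, HasDerivAt f (f' t) t)
    (hf' : Continuous f') {a b : ℝ} (hab : a ≤ b) (hne : ∀ t ∈ Set.Ioo a b, f' t ≠ 0) :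
    ∫ t in a..b, |f' t| = |f b - f a| := by
  have hint : ∫ t in a..b, f' t = f b - f a :=
    intervalIntegral.integral_eq_sub_of_hasDerivAt (fun t _ => hf t) (hf'.intervalIntegrable a b)
  have hsign : (∀ t ∈ Set.Ioo a b, 0 < f' t) ∨ ∀ t ∈ Set.Ioo a b, f' t < 0 := by
    by_contra! ⟨⟨s, hs, hs'⟩, t, ht, ht'⟩
    obtain ⟨w, hw, hw'⟩ := isPreconnected_Ioo.intermediate_value hs ht hf'.continuousOn ⟨hs', ht'⟩
    exact hne w hw hw'
  rw [← hint]
  simp only [intervalIntegral.integral_of_le hab, integral_Ioc_eq_integral_Ioo]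
  rcases hsign with h | h
  · rw [setIntegral_congr_fun measurableSet_Ioo fun t ht => abs_of_pos (h t ht),
      abs_of_nonneg (setIntegral_nonneg measurableSet_Ioo fun t ht => (h t ht).le)]
  · rw [setIntegral_congr_fun measurableSet_Ioo fun t ht => abs_of_neg (h t ht), integral_neg,
      abs_of_nonpos (setIntegral_nonpos measurableSet_Ioo fun t ht => (h t ht).le)]

theorem integral_abs_deriv_le_card_zeros {f f' : ℝ → ℝ} (hf : ∀ t, HasDerivAt f (f' t) t)
    (hf' : Continuous f') {M : ℝ} (hM : ∀ s t, |f s - f t| ≤ M) (Z : Finset ℝ) {a b : ℝ}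
    (hab : a ≤ b) (hZ : ∀ t ∈ Set.Ioo a b, f' t = 0 → t ∈ Z) :
    ∫ t in a..b, |f' t| ≤ (Z.card + 1) * M := by
  induction Z using Finset.induction_on_max generalizing a b with
  | empty =>
    rw [integral_abs_deriv_eq_abs_sub hf hf' hab fun t ht h0 => Finset.notMem_empty t (hZ t ht h0)]
    simpa using hM b a
  | insert z Z hlt ih =>
    have hM₀ : 0 ≤ M := (abs_nonneg _).trans (hM a a)
    rw [Finset.card_insert_of_notMem fun hz => (hlt z hz).false, Nat.cast_succ]
    by_cases hz : z ∈ Set.Ioo a b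
    · have hleft : ∫ t in a..z, |f' t| ≤ (Z.card + 1) * M :=
        ih hz.1.le fun t ht h0 =>
          (Finset.mem_insert.mp (hZ t ⟨ht.1, ht.2.trans hz.2⟩ h0)).resolve_left ht.2.ne
      have hright : ∫ t in z..b, |f' t| ≤ M := by
        rw [integral_abs_deriv_eq_abs_sub hf hf' hz.2.le fun t ht h0 => ?_]
        · exact hM b z
        · rcases Finset.mem_insert.mp (hZ t ⟨hz.1.trans ht.1, ht.2⟩ h0) with rfl | htZ
          · exact ht.1.false
          · exact ht.1.asymm (hlt t htZ)
      rw [← intervalIntegral.integral_add_adjacent_intervals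
        (hf'.abs.intervalIntegrable a z) (hf'.abs.intervalIntegrable z b)]
      linarith
    · have := ih hab fun t ht h0 =>
        (Finset.mem_insert.mp (hZ t ht h0)).resolve_left fun h => hz (h ▸ ht)
      linarith

theorem integral_abs_deriv_div_le {P Q : ℝ[X]} (hQ : ∀ t, Q.eval t ≠ 0) {M : ℝ}
    (hM : ∀ s t, |P.eval s / Q.eval s - P.eval t / Q.eval t| ≤ M) {a b : ℝ} (hab : a ≤ b) :
    ∫ t in a..b, |deriv (fun t => P.eval t / Q.eval t) t| ≤
      (P.natDegree + Q.natDegree + 1) * M := by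
  set R : ℝ[X] := derivative P * Q - P * derivative Q with hR
  have hM₀ : 0 ≤ M := (abs_nonneg _).trans (hM 0 0)
  have hderiv : ∀ t, HasDerivAt (fun t => P.eval t / Q.eval t) (R.eval t / Q.eval t ^ 2) t :=
    fun t => by simpa [hR] using (P.hasDerivAt t).fun_div (Q.hasDerivAt t) (hQ t)
  simp only [(hderiv _).deriv]
  rcases eq_or_ne R 0 with h0 | h0
  · simp only [h0, eval_zero, zero_div, abs_zero, intervalIntegral.integral_zero]
    positivity
  have hdeg : R.natDegree ≤ P.natDegree + Q.natDegree := by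
    refine (natDegree_sub_le _ _).trans (max_le ?_ ?_)
    · exact natDegree_mul_le_of_le ((natDegree_derivative_le P).trans (Nat.sub_le _ _)) le_rfl
    · exact natDegree_mul_le_of_le le_rfl ((natDegree_derivative_le Q).trans (Nat.sub_le _ _))
  have hcard : (R.roots.toFinset.card : ℝ) ≤ P.natDegree + Q.natDegree := by
    exact_mod_cast (Multiset.toFinset_card_le _).trans ((card_roots' R).trans hdeg)
  refine (integral_abs_deriv_le_card_zeros hderiv ?_ hM R.roots.toFinset hab ?_).trans
    (by gcongr)
  · exact R.continuous.div (Q.continuous.pow 2) fun t => pow_ne_zero 2 (hQ t)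
  · intro t _ ht
    simpa [h0, hQ t] using ht

theorem lintegral_ofReal_le_of_forall_intervalIntegral_le {f : ℝ → ℝ} (hf : Continuous f)
    (hf₀ : ∀ t, 0 ≤ f t) {M : ℝ} (hM : ∀ a b, a ≤ b → ∫ t in a..b, f t ≤ M) :
    ∫⁻ t, ENNReal.ofReal (f t) ≤ ENNReal.ofReal M := by
  refine le_of_tendsto ((aecover_Ioc Filter.tendsto_neg_atTop_atBot
    Filter.tendsto_id).lintegral_tendsto_of_countably_generated
      hf.measurable.ennreal_ofReal.aemeasurable) ?_
  filter_upwards [Filter.eventually_ge_atTop (0 : ℝ)] with k hk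
  have hle : -k ≤ id k := by simpa using hk
  rw [← ofReal_integral_eq_lintegral_ofReal hf.integrableOn_Ioc (ae_of_all _ hf₀),
    ← intervalIntegral.integral_of_le hle]
  exact ENNReal.ofReal_le_ofReal (hM _ _ hle)

end Variation

section PolynomialOnLines

open Polynomial
open scoped InnerProductSpace

/-- `f` restricts to a polynomial of degree at most `m` on every line. Unlike polynomiality itself
this needs no coordinates on `V`. -/
def PolynomialOnLines {V : Type*} [AddCommGroup V] [Module ℝ V] (m : ℕ) (f : V → ℝ) : Prop :=
  ∀ y u : V, ∃ P : ℝ[X], P.natDegree ≤ m ∧ ∀ t, P.eval t = f (y + t • u)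

namespace PolynomialOnLines

theorem mvPolynomial_eval {ι : Type*} (p : MvPolynomial ι ℝ) :
    PolynomialOnLines p.totalDegree fun x : ι → ℝ => MvPolynomial.eval x p := by
  intro y u
  refine ⟨MvPolynomial.aeval (fun i => C (y i) + X * C (u i)) p, ?_, fun t => ?_⟩
  · refine (MvPolynomial.aeval_natDegree_le (n := 1) p le_rfl _ fun i => ?_).trans_eq (mul_one _)
    compute_degree
  · have hconst : (evalRingHom t).comp C = RingHom.id ℝ := RingHom.ext fun c => eval_C
    have hvar : (fun i => (C (y i) + X * C (u i)).eval t) = y + t • u := by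
      ext i
      simp only [eval_add, eval_mul, eval_C, eval_X, Pi.add_apply, Pi.smul_apply, smul_eq_mul]
    rw [MvPolynomial.aeval_def, MvPolynomial.polynomial_eval_eval₂, algebraMap_eq, hconst, hvar,
      MvPolynomial.eval₂_id]

variable {V : Type*} [AddCommGroup V] [Module ℝ V] {m : ℕ}

theorem sum {ι : Type*} (s : Finset ι) {f : ι → V → ℝ} (h : ∀ i, PolynomialOnLines m (f i)) :
    PolynomialOnLines m fun y => ∑ i ∈ s, f i y := by
  intro y u
  choose P hdeg heval using fun i => h i y u
  refine ⟨∑ i ∈ s, P i, natDegree_sum_le_of_forall_le _ _ fun i _ => hdeg i, fun t => ?_⟩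
  simp only [eval_finsetSum, heval]

theorem sq {f : V → ℝ} (h : PolynomialOnLines m f) :
    PolynomialOnLines (2 * m) fun y => f y ^ 2 := by
  intro y u
  obtain ⟨P, hdeg, heval⟩ := h y u
  exact ⟨P ^ 2, natDegree_pow_le_of_le 2 hdeg, fun t => by rw [eval_pow, heval]⟩

theorem norm_sq {F : Type*} [NormedAddCommGroup F] [InnerProductSpace ℝ F]
    [FiniteDimensional ℝ F] {Φ : V → F} (h : ∀ w, PolynomialOnLines m fun x => ⟪w, Φ x⟫_ℝ) :
    PolynomialOnLines (2 * m) fun x => ‖Φ x‖ ^ 2 := by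
  simp only [← (stdOrthonormalBasis ℝ F).sum_sq_inner_right]
  exact sum _ fun i => (h _).sq

end PolynomialOnLines

end PolynomialOnLines

section Saturation

open Polynomial
open scoped InnerProductSpace BigOperators

variable {V F : Type*} [NormedAddCommGroup F] [InnerProductSpace ℝ F]

/-- For a map `Φ` into an inner product space, the function of `x` that depends only on the
direction of `Φ x` and equals `s² / (1 + s²)` where `s` is the `w`-component of that direction. It
is bounded and, for polynomial `Φ`, a rational function of controlled degree. -/
noncomputable def saturation (Φ : V → F) (w : F) (x : V) : ℝ :=
  ⟪w, Φ x⟫_ℝ ^ 2 / (‖Φ x‖ ^ 2 + ⟪w, Φ x⟫_ℝ ^ 2)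

theorem saturation_nonneg (Φ : V → F) (w : F) (x : V) : 0 ≤ saturation Φ w x := by
  unfold saturation
  positivity

theorem saturation_le_one (Φ : V → F) (w : F) (x : V) : saturation Φ w x ≤ 1 :=
  div_le_one_of_le₀ (by linarith [sq_nonneg ‖Φ x‖]) (by positivity)

theorem saturation_eq_normalize {Φ : V → F} {x : V} (hx : Φ x ≠ 0) (w : F) :
    saturation Φ w x =
      ⟪w, ‖Φ x‖⁻¹ • Φ x⟫_ℝ ^ 2 / (1 + ⟪w, ‖Φ x‖⁻¹ • Φ x⟫_ℝ ^ 2) := by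
  have : ‖Φ x‖ ≠ 0 := norm_ne_zero_iff.mpr hx
  have : ‖Φ x‖ ^ 2 + ⟪w, Φ x⟫_ℝ ^ 2 ≠ 0 := by positivity
  rw [saturation, real_inner_smul_right]
  field_simp

theorem one_le_inner_sq_add_expect_abs_saturation_sub [FiniteDimensional ℝ F] {Φ : V → F} {y z : V}
    (hy : Φ y ≠ 0) (hz : Φ z ≠ 0) :
    1 ≤ 2 * (⟪Φ y, Φ z⟫_ℝ ^ 2 / (‖Φ y‖ ^ 2 * ‖Φ z‖ ^ 2)) +
      10890 * 𝔼 ω, |saturation Φ (randomVector F ω) y - saturation Φ (randomVector F ω) z| := by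
  have h := one_le_inner_sq_add_expect_abs_sub (norm_smul_inv_norm (𝕜 := ℝ) hy)
    (norm_smul_inv_norm (𝕜 := ℝ) hz)
  simp only [RCLike.ofReal_real_eq_id, id_eq, ← saturation_eq_normalize hy,
    ← saturation_eq_normalize hz] at h
  rwa [real_inner_smul_left, real_inner_smul_right, ← mul_assoc, mul_pow, ← mul_inv, inv_pow,
    mul_pow, inv_mul_eq_div] at h

variable [NormedAddCommGroup V] [NormedSpace ℝ V] {Φ : V → F}

theorem contDiff_saturation (hΦ : ContDiff ℝ 1 Φ) (hΦ₀ : ∀ x, Φ x ≠ 0) (w : F) :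
    ContDiff ℝ 1 (saturation Φ w) := by
  have hw : ContDiff ℝ 1 fun x => ⟪w, Φ x⟫_ℝ ^ 2 := (contDiff_const.inner ℝ hΦ).pow 2
  refine hw.div ((hΦ.norm_sq ℝ).add hw) fun x => ?_
  have := norm_pos_iff.mpr (hΦ₀ x)
  positivity

theorem hasDerivAt_comp_line {f : V → ℝ} (hf : ContDiff ℝ 1 f) (y u : V) (t : ℝ) :
    HasDerivAt (fun t : ℝ => f (y + t • u)) (fderiv ℝ f (y + t • u) u) t := by
  have hline : HasDerivAt (fun t : ℝ => y + t • u) u t := by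
    simpa using ((hasDerivAt_id t).smul_const u).const_add y
  exact (hf.differentiable one_ne_zero (y + t • u)).hasFDerivAt.comp_hasDerivAt t hline

theorem abs_sub_le_integral_abs_fderiv {f : V → ℝ} (hf : ContDiff ℝ 1 f) (y v : V) :
    |f y - f (y + v)| ≤ ∫ t in (0 : ℝ)..1, |fderiv ℝ f (y + t • v) v| := by
  have hcont : Continuous fun t : ℝ => fderiv ℝ f (y + t • v) v := by
    have := hf.continuous_fderiv one_ne_zero
    fun_prop
  have hint := intervalIntegral.integral_eq_sub_of_hasDerivAt
    (fun t _ => hasDerivAt_comp_line hf y v t) (hcont.intervalIntegrable 0 1)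
  rw [one_smul, zero_smul, add_zero] at hint
  rw [abs_sub_comm, ← hint]
  exact intervalIntegral.abs_integral_le_integral_abs zero_le_one

theorem integral_abs_fderiv_saturation_le [FiniteDimensional ℝ F] (hΦ : ContDiff ℝ 1 Φ)
    (hΦ₀ : ∀ x, Φ x ≠ 0) {m : ℕ} (hpoly : ∀ w, PolynomialOnLines m fun x => ⟪w, Φ x⟫_ℝ)
    (w : F) (y u : V) {a b : ℝ} (hab : a ≤ b) :
    ∫ t in a..b, |fderiv ℝ (saturation Φ w) (y + t • u) u| ≤ 4 * m + 1 := by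
  obtain ⟨P, hPdeg, hP⟩ := (hpoly w).sq y u
  obtain ⟨Q, hQdeg, hQ⟩ := PolynomialOnLines.norm_sq hpoly y u
  have hline : (fun t : ℝ => saturation Φ w (y + t • u)) =
      fun t => P.eval t / (Q + P).eval t := by
    simp only [saturation, eval_add, hP, hQ]
  have hne : ∀ t, (Q + P).eval t ≠ 0 := by
    intro t
    have := norm_pos_iff.mpr (hΦ₀ (y + t • u))
    rw [eval_add, hP, hQ]
    positivity
  have hosc : ∀ s t, |P.eval s / (Q + P).eval s - P.eval t / (Q + P).eval t| ≤ 1 := by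
    intro s t
    rw [← congrFun hline s, ← congrFun hline t]
    exact abs_sub_le_of_nonneg_of_le (saturation_nonneg ..) (saturation_le_one ..)
      (saturation_nonneg ..) (saturation_le_one ..)
  have hdeg : ((P.natDegree + (Q + P).natDegree : ℕ) : ℝ) ≤ (2 * m + 2 * m : ℕ) :=
    Nat.cast_le.mpr (add_le_add hPdeg (natDegree_add_le_of_degree_le hQdeg hPdeg))
  push_cast at hdeg
  simp only [← (hasDerivAt_comp_line (contDiff_saturation hΦ hΦ₀ w) y u _).deriv, hline]
  linarith [integral_abs_deriv_div_le hne hosc hab]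

end Saturation

section VariationSeminorm

open scoped BigOperators

variable {V ι : Type*} [NormedAddCommGroup V] [NormedSpace ℝ V] [Fintype ι]

/-- The average absolute directional derivative at `y` of a finite family of functions, as a
seminorm in the direction. -/
noncomputable def variationSeminorm (s : ι → V → ℝ) (y : V) : Seminorm ℝ V :=
  .of (fun v => 𝔼 i, |fderiv ℝ (s i) y v|)
    (fun v w => by
      rw [← Finset.expect_add_distrib]
      refine Finset.expect_le_expect fun i _ => ?_
      rw [map_add]
      exact abs_add_le _ _)
    (fun c v => by
      rw [Finset.mul_expect]
      simp only [map_smul, smul_eq_mul, abs_mul, Real.norm_eq_abs])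

theorem variationSeminorm_apply (s : ι → V → ℝ) (y v : V) :
    variationSeminorm s y v = 𝔼 i, |fderiv ℝ (s i) y v| := rfl

variable {s : ι → V → ℝ} (hs : ∀ i, ContDiff ℝ 1 (s i))
include hs

theorem continuous_variationSeminorm :
    Continuous fun z : V × V => variationSeminorm s z.1 z.2 := by
  simp only [variationSeminorm_apply, Fintype.expect_eq_sum_div_card]
  have := fun i => (hs i).continuous_fderiv one_ne_zero
  fun_prop

theorem integral_variationSeminorm (y u v : V) (a b : ℝ) :
    ∫ t in a..b, variationSeminorm s (y + t • u) v =
      𝔼 i, ∫ t in a..b, |fderiv ℝ (s i) (y + t • u) v| := by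
  simp only [variationSeminorm_apply, Fintype.expect_eq_sum_div_card]
  rw [intervalIntegral.integral_div, intervalIntegral.integral_finsetSum fun i _ => ?_]
  have := (hs i).continuous_fderiv one_ne_zero
  exact Continuous.intervalIntegrable (by fun_prop) a b

theorem expect_abs_sub_le_integral_variationSeminorm (y v : V) :
    𝔼 i, |s i y - s i (y + v)| ≤ ∫ t in (0 : ℝ)..1, variationSeminorm s (y + t • v) v := by
  rw [integral_variationSeminorm hs]
  exact Finset.expect_le_expect fun i _ => abs_sub_le_integral_abs_fderiv (hs i) y v

end VariationSeminorm

section MonomialMap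

open Module
open scoped InnerProductSpace

variable {n d : ℕ}

/-- The polynomial with coefficients `w` in the monomials whose exponents in each variable are at
most `d`. -/
noncomputable def monomialCombination (w : EuclideanSpace ℝ (Fin n → Fin (d + 1))) :
    MvPolynomial (Fin n) ℝ :=
  ∑ α, MvPolynomial.monomial (Finsupp.equivFunOnFinite.symm fun i => (α i : ℕ)) (w α)

/-- The vector of all monomials with exponents at most `d`, the analogue of the Veronese map. -/
noncomputable def monomialMap (n d : ℕ) (x : EuclideanSpace ℝ (Fin n)) :
    EuclideanSpace ℝ (Fin n → Fin (d + 1)) :=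
  WithLp.toLp 2 fun α => ∏ i, x i ^ (α i : ℕ)

theorem eval_monomialCombination (w : EuclideanSpace ℝ (Fin n → Fin (d + 1)))
    (x : EuclideanSpace ℝ (Fin n)) :
    MvPolynomial.eval x (monomialCombination w) = ⟪w, monomialMap n d x⟫_ℝ := by
  simp [monomialCombination, monomialMap, PiLp.inner_apply, MvPolynomial.eval_monomial, mul_comm,
    Finsupp.prod_fintype]

theorem monomialCombination_ne_zero {w : EuclideanSpace ℝ (Fin n → Fin (d + 1))} (hw : w ≠ 0) :
    monomialCombination w ≠ 0 := by
  contrapose! hw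
  ext α
  have hinj : ∀ β : Fin n → Fin (d + 1),
      (fun i => (β i : ℕ)) = (fun i => (α i : ℕ)) ↔ β = α := by
    simp [funext_iff, Fin.ext_iff]
  have := congrArg (MvPolynomial.coeff (Finsupp.equivFunOnFinite.symm fun i => (α i : ℕ))) hw
  simpa [monomialCombination, MvPolynomial.coeff_sum, MvPolynomial.coeff_monomial, hinj] using this

theorem totalDegree_monomialCombination_le (w : EuclideanSpace ℝ (Fin n → Fin (d + 1))) :
    (monomialCombination w).totalDegree ≤ n * d := by
  refine MvPolynomial.totalDegree_finsetSum_le fun α _ =>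
    (MvPolynomial.totalDegree_monomial_le _ _).trans ?_
  rw [Finsupp.sum_fintype _ _ fun _ => rfl]
  simpa using Finset.sum_le_card_nsmul Finset.univ (fun i => (α i : ℕ)) d fun i _ => (α i).is_le

theorem monomialMap_ne_zero (x : EuclideanSpace ℝ (Fin n)) : monomialMap n d x ≠ 0 := by
  intro h
  simpa [monomialMap] using congrArg (fun w => w 0) h

theorem contDiff_monomialMap : ContDiff ℝ 1 (monomialMap n d) := by
  rw [contDiff_euclidean]
  intro α
  simp only [monomialMap]
  fun_prop

theorem polynomialOnLines_inner_monomialMap (w : EuclideanSpace ℝ (Fin n → Fin (d + 1))) :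
    PolynomialOnLines (n * d) fun x => ⟪w, monomialMap n d x⟫_ℝ := by
  intro y u
  obtain ⟨P, hdeg, hP⟩ := PolynomialOnLines.mvPolynomial_eval (monomialCombination w) y u
  exact ⟨P, hdeg.trans (totalDegree_monomialCombination_le w),
    fun t => (hP t).trans (eval_monomialCombination w (y + t • u))⟩

theorem volume_inner_monomialMap_eq_zero {w : EuclideanSpace ℝ (Fin n → Fin (d + 1))}
    (hw : w ≠ 0) : volume {x | ⟪w, monomialMap n d x⟫_ℝ = 0} = 0 := by
  have hmeas : MeasurableSet {x : Fin n → ℝ | MvPolynomial.eval x (monomialCombination w) = 0} :=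
    (isClosed_eq (MvPolynomial.continuous_eval _) continuous_const).measurableSet
  rw [← volume_zeroLocus_eq_zero (monomialCombination_ne_zero hw),
    ← (PiLp.volume_preserving_ofLp (Fin n)).measure_preimage hmeas.nullMeasurableSet]
  simp only [← eval_monomialCombination]
  rfl

theorem exists_linear_isotropic_monomialMap (n d : ℕ) {X : Set (EuclideanSpace ℝ (Fin n))}
    (hX : volume X ≠ ∞) :
    ∃ B : EuclideanSpace ℝ (Fin n → Fin (d + 1)) →L[ℝ] EuclideanSpace ℝ (Fin n → Fin (d + 1)),
      Function.Injective B ∧ ∀ v, ‖v‖ = 1 →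
        ∫ x in X, ⟪v, B (monomialMap n d x)⟫_ℝ ^ 2 / ‖B (monomialMap n d x)‖ ^ 2 ≤
          4 * volume.real X / (d + 1) ^ n := by
  have hmeas : Measurable (monomialMap n d) := contDiff_monomialMap.continuous.measurable
  have : IsFiniteMeasure (volume.restrict X) := ⟨by simpa using hX.lt_top⟩
  obtain ⟨B, hB, hint⟩ := exists_injective_integral_inner_sq_div_le
    ((volume.restrict X).map (monomialMap n d)) fun v hv => by
      rw [Measure.map_apply hmeas (isClosed_eq (by fun_prop) continuous_const).measurableSet]
      exact Measure.restrict_le_self.absolutelyContinuous (volume_inner_monomialMap_eq_zero hv)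
  refine ⟨B, hB, fun v hv => ?_⟩
  have hratio : Measurable fun y => ⟪v, B y⟫_ℝ ^ 2 / ‖B y‖ ^ 2 := by fun_prop
  have hvint := hint v hv
  rw [integral_map hmeas.aemeasurable hratio.aestronglyMeasurable,
    map_measureReal_apply hmeas .univ] at hvint
  simpa using hvint

theorem exists_seminorm_field (n d : ℕ) {X : Set (EuclideanSpace ℝ (Fin n))}
    (hX : volume X ≠ ∞) :
    ∃ (H : EuclideanSpace ℝ (Fin n) → Seminorm ℝ (EuclideanSpace ℝ (Fin n)))
      (ρ : EuclideanSpace ℝ (Fin n) → EuclideanSpace ℝ (Fin n) → ℝ),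
      Continuous (fun z : EuclideanSpace ℝ (Fin n) × EuclideanSpace ℝ (Fin n) => H z.1 z.2) ∧
      (∀ y u a b, a ≤ b → ∫ t in a..b, H (y + t • u) u ≤ 4 * (n * d) + 1) ∧
      Continuous (Function.uncurry ρ) ∧ (∀ y z, 0 ≤ ρ y z) ∧
      (∀ y v, 1 ≤ 2 * ρ y (y + v) + 10890 * ∫ t in (0 : ℝ)..1, H (y + t • v) v) ∧
      ∀ y, ∫ z in X, ρ y z ≤ 4 * volume.real X / (d + 1) ^ n := by
  obtain ⟨B, hB, hiso⟩ := exists_linear_isotropic_monomialMap n d hX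
  set Φ : EuclideanSpace ℝ (Fin n) → _ := fun x => B (monomialMap n d x)
  have hΦ : ContDiff ℝ 1 Φ := B.contDiff.comp contDiff_monomialMap
  have hΦ₀ : ∀ x, Φ x ≠ 0 := fun x => (map_ne_zero_iff B hB).mpr (monomialMap_ne_zero x)
  have hpoly : ∀ w, PolynomialOnLines (n * d) fun x => ⟪w, Φ x⟫_ℝ := fun w => by
    simpa only [Φ, ContinuousLinearMap.adjoint_inner_left] using
      polynomialOnLines_inner_monomialMap (B.adjoint w)
  have hs := fun ω => contDiff_saturation hΦ hΦ₀ (randomVector _ ω)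
  have hcont := hΦ.continuous
  refine ⟨variationSeminorm fun ω => saturation Φ (randomVector _ ω),
    fun y z => ⟪Φ y, Φ z⟫_ℝ ^ 2 / (‖Φ y‖ ^ 2 * ‖Φ z‖ ^ 2), continuous_variationSeminorm hs,
    fun y u a b hab => ?_, ?_, fun y z => by positivity, fun y v => ?_, fun y => ?_⟩
  · rw [integral_variationSeminorm hs]
    refine Finset.expect_le Finset.univ_nonempty fun ω _ => ?_
    exact_mod_cast integral_abs_fderiv_saturation_le hΦ hΦ₀ hpoly _ y u hab
  · refine Continuous.div (by fun_prop) (by fun_prop) fun z => ?_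
    simpa using ⟨hΦ₀ z.1, hΦ₀ z.2⟩
  · have := expect_abs_sub_le_integral_variationSeminorm hs y v
    linarith [one_le_inner_sq_add_expect_abs_saturation_sub (hΦ₀ y) (hΦ₀ (y + v))]
  · refine le_of_eq_of_le (integral_congr_ae <| ae_of_all _ fun z => ?_)
      (hiso _ (norm_smul_inv_norm (𝕜 := ℝ) (hΦ₀ y)))
    simp only [RCLike.ofReal_real_eq_id, id_eq, real_inner_smul_left, mul_pow, inv_pow]
    rw [inv_mul_eq_div, div_div]

end MonomialMap

section SeminormBox

open Metric
open scoped Pointwise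

variable {V : Type*} [NormedAddCommGroup V] [NormedSpace ℝ V]

/-- The unit ball of the norm `max (‖·‖ / r) (p / ε)`: the norm constraint makes the body bounded
although `p` is only a seminorm. -/
def seminormBox (p : Seminorm ℝ V) (r ε : ℝ) : Set V :=
  closedBall 0 r ∩ p.closedBall 0 ε

theorem mem_seminormBox {p : Seminorm ℝ V} {r ε : ℝ} {v : V} :
    v ∈ seminormBox p r ε ↔ ‖v‖ ≤ r ∧ p v ≤ ε := by
  rw [seminormBox, Set.mem_inter_iff, mem_closedBall_zero_iff, Seminorm.mem_closedBall_zero]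

theorem convex_seminormBox (p : Seminorm ℝ V) (r ε : ℝ) : Convex ℝ (seminormBox p r ε) :=
  (convex_closedBall 0 r).inter (p.convex_closedBall 0 ε)

theorem neg_mem_seminormBox {p : Seminorm ℝ V} {r ε : ℝ} {v : V} :
    -v ∈ seminormBox p r ε ↔ v ∈ seminormBox p r ε := by
  rw [mem_seminormBox, mem_seminormBox, norm_neg, map_neg_eq_map]

theorem isCompact_seminormBox [ProperSpace V] {p : Seminorm ℝ V} (hp : Continuous p) (r ε : ℝ) :
    IsCompact (seminormBox p r ε) := by
  rw [seminormBox, p.closedBall_zero_eq]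
  exact (isCompact_closedBall 0 r).inter_right (isClosed_le hp continuous_const)

theorem nonempty_interior_seminormBox {p : Seminorm ℝ V} (hp : Continuous p) {r ε : ℝ}
    (hr : 0 < r) (hε : 0 < ε) : (interior (seminormBox p r ε)).Nonempty := by
  refine ⟨0, mem_interior_iff_mem_nhds.mpr (Filter.inter_mem (closedBall_mem_nhds 0 hr) ?_)⟩
  rw [p.closedBall_zero_eq]
  exact hp.continuousAt.eventually_le_const (by simpa using hε)

theorem smul_seminormBox (p : Seminorm ℝ V) (r ε : ℝ) {c : ℝ} (hc : 0 < c) :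
    c • seminormBox p r ε = seminormBox p (c * r) (c * ε) := by
  ext v
  rw [Set.mem_smul_set_iff_inv_smul_mem₀ hc.ne', mem_seminormBox, mem_seminormBox, norm_smul,
    map_smul_eq_mul, norm_inv, Real.norm_of_nonneg hc.le, inv_mul_le_iff₀ hc, inv_mul_le_iff₀ hc]

theorem mem_image_add_smul_seminormBox {p : Seminorm ℝ V} {r ε c : ℝ} (hc : 0 < c) {x y : V} :
    y ∈ (fun v => x + c • v) '' seminormBox p r ε ↔ ‖y - x‖ ≤ c * r ∧ p (y - x) ≤ c * ε := by
  rw [← Set.image_image (x + ·) (c • ·), Set.image_smul, smul_seminormBox p r ε hc,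
    Set.image_add_left, Set.mem_preimage, mem_seminormBox, neg_add_eq_sub]

theorem addHaar_image_add_seminormBox [FiniteDimensional ℝ V] [MeasurableSpace V] [BorelSpace V]
    (μ : Measure V) [μ.IsAddHaarMeasure] (p : Seminorm ℝ V) (r ε : ℝ) {c : ℝ} (hc : 0 < c)
    (x : V) :
    μ ((fun v => x + v) '' seminormBox p (c * r) (c * ε)) =
      ENNReal.ofReal (c ^ Module.finrank ℝ V) * μ (seminormBox p r ε) := by
  rw [← smul_seminormBox p r ε hc, Set.image_add_left, measure_preimage_add,
    Measure.addHaar_smul_of_nonneg μ hc.le]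

end SeminormBox

section BallSeminorm

open Metric

variable {V : Type*} [NormedAddCommGroup V] [NormedSpace ℝ V] [FiniteDimensional ℝ V]
  [MeasurableSpace V] [BorelSpace V] (μ : Measure V) [IsFiniteMeasureOnCompacts μ]
  {H : V → Seminorm ℝ V} (hH : Continuous fun z : V × V => H z.1 z.2)

include hH in
theorem integrableOn_seminorm_closedBall (c v : V) (r : ℝ) :
    IntegrableOn (fun y => H y v) (closedBall c r) μ :=
  (hH.comp (Continuous.prodMk_left v)).continuousOn.integrableOn_compact
    (isCompact_closedBall c r)

/-- A field of seminorms integrated over the unit ball around `c`. Continuity is only demanded to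
make the integral additive. -/
noncomputable def ballSeminorm (c : V) : Seminorm ℝ V :=
  .of (fun v => ∫ y in closedBall c 1, H y v ∂μ)
    (fun v w => by
      rw [← integral_add (integrableOn_seminorm_closedBall μ hH c v 1)
        (integrableOn_seminorm_closedBall μ hH c w 1)]
      exact integral_mono (integrableOn_seminorm_closedBall μ hH c _ 1)
        ((integrableOn_seminorm_closedBall μ hH c v 1).add
          (integrableOn_seminorm_closedBall μ hH c w 1)) fun y => map_add_le_add (H y) v w)
    (fun a v => by simp only [map_smul_eq_mul, integral_const_mul])

theorem ofReal_ballSeminorm (c v : V) :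
    ENNReal.ofReal (ballSeminorm μ hH c v) = ∫⁻ y in closedBall c 1, ENNReal.ofReal (H y v) ∂μ :=
  ofReal_integral_eq_lintegral_ofReal (integrableOn_seminorm_closedBall μ hH c v 1)
    (ae_of_all _ fun y => apply_nonneg (H y) v)

theorem continuous_ballSeminorm (c : V) : Continuous (ballSeminorm μ hH c) :=
  continuous_parametric_integral_of_continuous (f := fun v y => H y v)
    (hH.comp continuous_swap) (isCompact_closedBall c 1)

end BallSeminorm

section AveragedIncrement

open Metric

theorem setIntegral_setIntegral_swap {V W : Type*} [MetricSpace V]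
    [MeasurableSpace V] [BorelSpace V] [SecondCountableTopology V] [MetricSpace W]
    [MeasurableSpace W] [BorelSpace W] [SecondCountableTopology W] (μ : Measure V) (ν : Measure W)
    [IsFiniteMeasureOnCompacts μ] [IsFiniteMeasureOnCompacts ν] [SFinite μ] [SFinite ν]
    {f : V → W → ℝ} (hf : Continuous (Function.uncurry f)) {A : Set V} {B : Set W}
    (hA : IsCompact A) (hB : IsCompact B) :
    ∫ x in A, ∫ y in B, f x y ∂ν ∂μ = ∫ y in B, ∫ x in A, f x y ∂μ ∂ν := by
  refine integral_integral_swap ?_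
  rw [Measure.prod_restrict]
  exact hf.continuousOn.integrableOn_compact (hA.prod hB)

variable {V : Type*} [NormedAddCommGroup V] [MeasurableSpace V] [BorelSpace V]
  {μ : Measure V}

theorem setIntegral_comp_add_left_le [μ.IsAddLeftInvariant] {f : V → ℝ} (hf : ∀ z, 0 ≤ f z)
    {A B : Set V} (hB : IntegrableOn f B μ) {w : V} (hAB : ∀ y ∈ A, w + y ∈ B) :
    ∫ y in A, f (w + y) ∂μ ≤ ∫ z in B, f z ∂μ := by
  have hpres := measurePreserving_add_left μ w
  have hemb := measurableEmbedding_addLeft w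
  exact (setIntegral_mono_set ((hpres.integrableOn_comp_preimage hemb).mpr hB)
    (ae_of_all _ fun y => hf _) (ae_of_all _ hAB)).trans_eq
      (hpres.setIntegral_preimage_emb hemb f B)

variable [NormedSpace ℝ V]

theorem setIntegral_seminormBox_comp_add_left_le [μ.IsAddLeftInvariant] {f : V → ℝ}
    (hf : ∀ z, 0 ≤ f z) {c y : V} (hint : IntegrableOn f (closedBall c 1) μ)
    (hy : y ∈ closedBall c (1 / 2)) (p : Seminorm ℝ V) (ε : ℝ) :
    ∫ v in seminormBox p (1 / 2) ε, f (y + v) ∂μ ≤ ∫ z in closedBall c 1, f z ∂μ := by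
  refine setIntegral_comp_add_left_le hf hint fun v hv => ?_
  rw [mem_closedBall, dist_eq_norm] at hy ⊢
  rw [add_sub_right_comm]
  linarith [norm_add_le (y - c) v, (mem_seminormBox.mp hv).1]

variable [FiniteDimensional ℝ V] [μ.IsAddHaarMeasure]
  {H : V → Seminorm ℝ V} (hH : Continuous fun z : V × V => H z.1 z.2)

theorem integral_integral_segment_le_ballSeminorm (c : V) {v : V} (hv : ‖v‖ ≤ 1 / 2) :
    ∫ y in closedBall c (1 / 2), (∫ t in (0 : ℝ)..1, H (y + t • v) v) ∂μ ≤
      ballSeminorm μ hH c v := by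
  have hinner : ∀ t ∈ Set.Icc (0 : ℝ) 1,
      ∫ y in closedBall c (1 / 2), H (y + t • v) v ∂μ ≤ ballSeminorm μ hH c v := by
    intro t ht
    simp only [add_comm _ (t • v)]
    refine setIntegral_comp_add_left_le (fun z => apply_nonneg (H z) v)
      (integrableOn_seminorm_closedBall μ hH c v 1) fun y hy => ?_
    rw [mem_closedBall, dist_eq_norm] at hy ⊢
    calc ‖t • v + y - c‖ ≤ ‖t • v‖ + ‖y - c‖ := by rw [add_sub_assoc]; exact norm_add_le _ _
      _ ≤ 1 * (1 / 2) + 1 / 2 := by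
        rw [norm_smul, Real.norm_of_nonneg ht.1]
        gcongr
        exact ht.2
      _ = 1 := by norm_num
  have hcont : Continuous fun z : V × ℝ => H (z.1 + z.2 • v) v :=
    hH.comp (by fun_prop : Continuous fun z : V × ℝ => (z.1 + z.2 • v, v))
  simp only [intervalIntegral.integral_of_le zero_le_one, ← integral_Icc_eq_integral_Ioc]
  rw [setIntegral_setIntegral_swap μ volume (f := fun y t => H (y + t • v) v) hcont
    (isCompact_closedBall c _) isCompact_Icc]
  refine (setIntegral_mono_on ?_ (integrableOn_const (by simp)) measurableSet_Icc hinner).trans_eq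
    (by simp)
  exact (continuous_parametric_integral_of_continuous (f := fun t y => H (y + t • v) v)
    (hcont.comp continuous_swap) (isCompact_closedBall c _)).continuousOn.integrableOn_compact
    isCompact_Icc

variable {ρ : V → V → ℝ} (hρ : Continuous (Function.uncurry ρ)) {C : ℝ} (hC : 0 ≤ C)
  (hlower : ∀ y v, 1 ≤ 2 * ρ y (y + v) + C * ∫ t in (0 : ℝ)..1, H (y + t • v) v)
include hρ hC hlower

theorem measureReal_closedBall_le_integral_correlation (c : V) {ε : ℝ}
    (hε : C * ε ≤ μ.real (closedBall c (1 / 2)) / 2) {v : V}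
    (hv : v ∈ seminormBox (ballSeminorm μ hH c) (1 / 2) ε) :
    μ.real (closedBall c (1 / 2)) ≤ 4 * ∫ y in closedBall c (1 / 2), ρ y (y + v) ∂μ := by
  rw [mem_seminormBox] at hv
  have hρint : IntegrableOn (fun y => ρ y (y + v)) (closedBall c (1 / 2)) μ :=
    (hρ.comp (by fun_prop : Continuous fun y => (y, y + v))).continuousOn.integrableOn_compact
      (isCompact_closedBall c _)
  have hHint : IntegrableOn (fun y => ∫ t in (0 : ℝ)..1, H (y + t • v) v)
      (closedBall c (1 / 2)) μ := by
    refine (intervalIntegral.continuous_parametric_intervalIntegral_of_continuous' ?_ 0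
      1).continuousOn.integrableOn_compact (isCompact_closedBall c _)
    exact hH.comp (by fun_prop : Continuous fun z : V × ℝ => (z.1 + z.2 • v, v))
  have hmean : ∫ _ in closedBall c (1 / 2), (1 : ℝ) ∂μ ≤
      ∫ y in closedBall c (1 / 2),
        (2 * ρ y (y + v) + C * ∫ t in (0 : ℝ)..1, H (y + t • v) v) ∂μ :=
    integral_mono (integrableOn_const (isCompact_closedBall c _).measure_ne_top)
      ((hρint.const_mul 2).add (hHint.const_mul C)) fun y => hlower y v
  rw [setIntegral_const, smul_eq_mul, mul_one, integral_add (hρint.const_mul 2)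
    (hHint.const_mul C), integral_const_mul, integral_const_mul] at hmean
  have hsegment := (integral_integral_segment_le_ballSeminorm (μ := μ) hH c hv.1).trans hv.2
  linarith [mul_le_mul_of_nonneg_left hsegment hC]

theorem measureReal_seminormBox_le (hρ₀ : ∀ y z, 0 ≤ ρ y z) (c : V) {ε : ℝ}
    (hε : C * ε ≤ μ.real (closedBall c (1 / 2)) / 2) {Q : ℝ}
    (hQ : ∀ y, ∫ z in closedBall c 1, ρ y z ∂μ ≤ Q) :
    μ.real (seminormBox (ballSeminorm μ hH c) (1 / 2) ε) ≤ 4 * Q := by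
  set A := closedBall c (1 / 2 : ℝ)
  set K := seminormBox (ballSeminorm μ hH c) (1 / 2) ε
  have hKc : IsCompact K := isCompact_seminormBox (continuous_ballSeminorm μ hH c) _ _
  have hAc : IsCompact A := isCompact_closedBall c _
  have hcont : Continuous fun z : V × V => ρ z.1 (z.1 + z.2) :=
    hρ.comp (by fun_prop : Continuous fun z : V × V => (z.1, z.1 + z.2))
  have hinner : ∀ y ∈ A, ∫ v in K, ρ y (y + v) ∂μ ≤ Q := by
    refine fun y hy => (setIntegral_seminormBox_comp_add_left_le (hρ₀ y) ?_ hy _ ε).trans (hQ y)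
    exact (hρ.comp (Continuous.prodMk_right y)).continuousOn.integrableOn_compact
      (isCompact_closedBall c 1)
  have hβ : 0 < μ.real A :=
    ENNReal.toReal_pos (measure_closedBall_pos μ c (by norm_num)).ne' hAc.measure_ne_top
  refine le_of_mul_le_mul_left ?_ hβ
  calc μ.real A * μ.real K = ∫ _ in K, μ.real A ∂μ := by
        rw [setIntegral_const, smul_eq_mul, mul_comm]
    _ ≤ ∫ v in K, 4 * ∫ y in A, ρ y (y + v) ∂μ ∂μ := by
        refine setIntegral_mono_on (integrableOn_const hKc.measure_ne_top) ?_ hKc.measurableSet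
          fun v hv => measureReal_closedBall_le_integral_correlation hH hρ hC hlower c hε hv
        exact ((continuous_parametric_integral_of_continuous (f := fun v y => ρ y (y + v))
          (hcont.comp continuous_swap) hAc).const_mul 4).continuousOn.integrableOn_compact hKc
    _ = 4 * ∫ y in A, ∫ v in K, ρ y (y + v) ∂μ ∂μ := by
        rw [integral_const_mul,
          setIntegral_setIntegral_swap μ μ (f := fun y v => ρ y (y + v)) hcont hAc hKc]
    _ ≤ 4 * ∫ _ in A, Q ∂μ := by
        refine mul_le_mul_of_nonneg_left (setIntegral_mono_on ?_
          (integrableOn_const hAc.measure_ne_top) hAc.measurableSet hinner) (by norm_num)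
        exact (continuous_parametric_integral_of_continuous (f := fun y v => ρ y (y + v))
          hcont hKc).continuousOn.integrableOn_compact hAc
    _ = μ.real A * (4 * Q) := by
        rw [setIntegral_const, smul_eq_mul]
        ring

end AveragedIncrement

section Tube

open Metric
open scoped RealInnerProductSpace

theorem lintegral_setLIntegral_closedBall {V S : Type*} [PseudoMetricSpace V]
    [SecondCountableTopology V] [MeasurableSpace V] [BorelSpace V] [TopologicalSpace S]
    [SecondCountableTopology S] [MeasurableSpace S] [BorelSpace S] (μ : Measure V) [SFinite μ]
    (ν : Measure S) [SFinite ν] {c : S → V} (hc : Continuous c) (r : ℝ) {g : V → ℝ≥0∞}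
    (hg : Measurable g) :
    ∫⁻ s, ∫⁻ x in closedBall (c s) r, g x ∂μ ∂ν = ∫⁻ x, g x * ν {s | dist x (c s) ≤ r} ∂μ := by
  have hclosed : IsClosed {z : S × V | dist z.2 (c z.1) ≤ r} :=
    isClosed_le (by fun_prop) continuous_const
  have hmeas : Measurable ({z : S × V | dist z.2 (c z.1) ≤ r}.indicator fun z => g z.2) :=
    (hg.comp measurable_snd).indicator hclosed.measurableSet
  calc ∫⁻ s, ∫⁻ x in closedBall (c s) r, g x ∂μ ∂ν
      = ∫⁻ s, ∫⁻ x, {z : S × V | dist z.2 (c z.1) ≤ r}.indicator (fun z => g z.2) (s, x) ∂μ ∂ν :=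
        lintegral_congr fun s => (lintegral_indicator isClosed_closedBall.measurableSet g).symm
    _ = ∫⁻ x, ∫⁻ s, {s | dist x (c s) ≤ r}.indicator (fun _ => g x) s ∂ν ∂μ :=
        lintegral_lintegral_swap hmeas.aemeasurable
    _ = ∫⁻ x, g x * ν {s | dist x (c s) ≤ r} ∂μ :=
        lintegral_congr fun x => lintegral_indicator_const
          (isClosed_le (continuous_const.dist hc) continuous_const).measurableSet _

/-- The volume of a Euclidean ball of radius `r` in `ℝⁿ`, as a real number. -/
noncomputable def ballVolume (n : ℕ) (r : ℝ) : ℝ :=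
  volume.real (closedBall (0 : EuclideanSpace ℝ (Fin n)) r)

theorem ballVolume_nonneg (n : ℕ) (r : ℝ) : 0 ≤ ballVolume n r := measureReal_nonneg

theorem ballVolume_pos (n : ℕ) {r : ℝ} (hr : 0 < r) : 0 < ballVolume n r :=
  ENNReal.toReal_pos (measure_closedBall_pos _ _ hr).ne' (isCompact_closedBall _ _).measure_ne_top

theorem volume_closedBall_eq_ofReal {n : ℕ} (c : EuclideanSpace ℝ (Fin n)) (r : ℝ) :
    volume (closedBall c r) = ENNReal.ofReal (ballVolume n r) := by
  rw [ballVolume, ofReal_measureReal (isCompact_closedBall _ _).measure_ne_top,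
    Measure.addHaar_closedBall_center]

variable {n : ℕ} {q u x : EuclideanSpace ℝ (Fin n)} {L : ℝ}

theorem tube_eq_cthickening (q u : EuclideanSpace ℝ (Fin n)) (hL : 0 ≤ L) :
    tube q u L = cthickening 1 ((fun t : ℝ => q + t • u) '' Set.Icc 0 L) := by
  have hsegment : {y | ∃ t : ℝ, 0 ≤ t ∧ t ≤ L ∧ y = q + t • u} =
      (fun t : ℝ => q + t • u) '' Set.Icc 0 L := by
    ext y
    simp only [Set.mem_ofPred_eq, Set.mem_image, Set.mem_Icc, and_assoc, eq_comm]
  ext x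
  rw [tube, hsegment, Set.mem_ofPred_eq, mem_cthickening_iff, ENNReal.le_ofReal_iff_toReal_le
    (infEDist_ne_top ((Set.nonempty_Icc.mpr hL).image _)) zero_le_one, infDist]

theorem isCompact_image_line (q u : EuclideanSpace ℝ (Fin n)) (L : ℝ) :
    IsCompact ((fun t : ℝ => q + t • u) '' Set.Icc 0 L) :=
  isCompact_Icc.image (by fun_prop)

theorem isCompact_tube (q u : EuclideanSpace ℝ (Fin n)) (hL : 0 ≤ L) : IsCompact (tube q u L) := by
  rw [tube_eq_cthickening q u hL]
  exact (isCompact_image_line q u L).cthickening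

theorem mem_tube_iff (hL : 0 ≤ L) :
    x ∈ tube q u L ↔ ∃ t ∈ Set.Icc 0 L, x ∈ closedBall (q + t • u) 1 := by
  rw [tube_eq_cthickening q u hL,
    (isCompact_image_line q u L).cthickening_eq_biUnion_closedBall zero_le_one]
  simp only [Set.biUnion_image, Set.mem_iUnion, exists_prop]

theorem closedBall_subset_tube {t : ℝ} (ht : t ∈ Set.Icc 0 L) :
    closedBall (q + t • u) 1 ⊆ tube q u L :=
  fun _ hx => (mem_tube_iff (ht.1.trans ht.2)).mpr ⟨t, ht, hx⟩

theorem isBounded_iUnion_tube {ι : Type*} [Finite ι] (p w : ι → EuclideanSpace ℝ (Fin n))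
    (hL : 0 ≤ L) : Bornology.IsBounded (⋃ i, tube (p i) (w i) L) :=
  (isCompact_iUnion fun i => isCompact_tube (p i) (w i) hL).isBounded

theorem exists_closedBall_subset_iUnion_tube {ι : Sort*} {p w : ι → EuclideanSpace ℝ (Fin n)}
    (hL : 0 ≤ L) (hx : x ∈ ⋃ i, tube (p i) (w i) L) :
    ∃ c, x ∈ closedBall c 1 ∧ closedBall c 1 ⊆ ⋃ i, tube (p i) (w i) L := by
  obtain ⟨i, hi⟩ := Set.mem_iUnion.mp hx
  obtain ⟨t, ht, hxt⟩ := (mem_tube_iff hL).mp hi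
  exact ⟨_, hxt, (closedBall_subset_tube ht).trans
    (Set.subset_iUnion (fun i => tube (p i) (w i) L) i)⟩

theorem tube_zero (q u : EuclideanSpace ℝ (Fin n)) : tube q u 0 = closedBall q 1 := by
  ext x
  rw [mem_tube_iff le_rfl]
  simp only [Set.Icc_self, Set.mem_singleton_iff, exists_eq_left, zero_smul, add_zero]

theorem one_le_volume_setOf_dist_line_le_two (hu : ‖u‖ = 1) (hL : 0 ≤ L) (hx : x ∈ tube q u L) :
    1 ≤ volume {s : ℝ | dist x (q + s • u) ≤ 2} := by
  obtain ⟨t, -, ht⟩ := (mem_tube_iff hL).mp hx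
  have hsubset : Set.Icc t (t + 1) ⊆ {s : ℝ | dist x (q + s • u) ≤ 2} := fun s hs => by
    have hdist : dist (q + t • u) (q + s • u) ≤ 1 := by
      rw [dist_add_left, dist_eq_norm, ← sub_smul, norm_smul, hu, mul_one, Real.norm_eq_abs,
        abs_le]
      constructor <;> linarith [hs.1, hs.2]
    rw [Set.mem_ofPred_eq]
    linarith [dist_triangle x (q + t • u) (q + s • u), mem_closedBall.mp ht]
  simpa using measure_mono (μ := volume) hsubset

theorem volume_setOf_dist_line_le_one_le (q x : EuclideanSpace ℝ (Fin n)) (hu : ‖u‖ = 1) :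
    volume {s : ℝ | dist x (q + s • u) ≤ 1} ≤ 2 := by
  have hsubset : {s : ℝ | dist x (q + s • u) ≤ 1} ⊆ closedBall ⟪x - q, u⟫ 1 := fun s hs => by
    have hinner : ⟪x - q, u⟫ - s = ⟪x - (q + s • u), u⟫ := by
      rw [← sub_sub, inner_sub_left (x - q), real_inner_smul_left, real_inner_self_eq_norm_sq, hu]
      ring
    have hproj := abs_real_inner_le_norm (x - (q + s • u)) u
    rw [hu, mul_one, ← dist_eq_norm] at hproj
    rw [mem_closedBall', Real.dist_eq, hinner]
    exact hproj.trans hs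
  simpa using measure_mono (μ := volume) hsubset

theorem setLIntegral_closedBall_add (q v : EuclideanSpace ℝ (Fin n)) (r : ℝ)
    {g : EuclideanSpace ℝ (Fin n) → ℝ≥0∞} (hg : Measurable g) :
    ∫⁻ x in closedBall (q + v) r, g x = ∫⁻ z in closedBall q r, g (z + v) := by
  rw [← (measurePreserving_add_right volume v).setLIntegral_comp_preimage
    measurableSet_closedBall hg, preimage_add_right_closedBall, add_sub_cancel_right]

theorem lintegral_setLIntegral_closedBall_line_le (q u : EuclideanSpace ℝ (Fin n)) (r : ℝ)
    {g : EuclideanSpace ℝ (Fin n) → ℝ≥0∞} (hg : Measurable g) {M : ℝ≥0∞}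
    (hM : ∀ z, ∫⁻ t : ℝ, g (z + t • u) ≤ M) :
    ∫⁻ s : ℝ, ∫⁻ x in closedBall (q + s • u) r, g x ≤
      ENNReal.ofReal (ballVolume n r) * M := by
  calc ∫⁻ s : ℝ, ∫⁻ x in closedBall (q + s • u) r, g x
      = ∫⁻ s : ℝ, ∫⁻ z in closedBall q r, g (z + s • u) :=
        lintegral_congr fun s => setLIntegral_closedBall_add q (s • u) r hg
    _ = ∫⁻ z in closedBall q r, ∫⁻ s : ℝ, g (z + s • u) :=
        lintegral_lintegral_swap (hg.comp (by fun_prop : Measurable fun z :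
          ℝ × EuclideanSpace ℝ (Fin n) => z.2 + z.1 • u)).aemeasurable
    _ ≤ ∫⁻ _ in closedBall q r, M := lintegral_mono hM
    _ = ENNReal.ofReal (ballVolume n r) * M := by
        rw [setLIntegral_const, mul_comm, volume_closedBall_eq_ofReal]

theorem setLIntegral_tube_le (q : EuclideanSpace ℝ (Fin n)) (hu : ‖u‖ = 1) (hL : 0 ≤ L)
    {g : EuclideanSpace ℝ (Fin n) → ℝ≥0∞} (hg : Measurable g) {M : ℝ≥0∞}
    (hM : ∀ z, ∫⁻ t : ℝ, g (z + t • u) ≤ M) :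
    ∫⁻ x in tube q u L, g x ≤ ENNReal.ofReal (ballVolume n 2) * M := by
  calc ∫⁻ x in tube q u L, g x
      ≤ ∫⁻ x in tube q u L, g x * volume {s : ℝ | dist x (q + s • u) ≤ 2} :=
        setLIntegral_mono' (isCompact_tube q u hL).measurableSet fun x hx =>
          le_mul_of_one_le_right' (one_le_volume_setOf_dist_line_le_two hu hL hx)
    _ ≤ ∫⁻ x, g x * volume {s : ℝ | dist x (q + s • u) ≤ 2} := setLIntegral_le_lintegral _ _
    _ = ∫⁻ s : ℝ, ∫⁻ x in closedBall (q + s • u) 2, g x :=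
        (lintegral_setLIntegral_closedBall _ _ (by fun_prop) _ hg).symm
    _ ≤ ENNReal.ofReal (ballVolume n 2) * M :=
        lintegral_setLIntegral_closedBall_line_le q u 2 hg hM

theorem ofReal_mul_ballVolume_le (q : EuclideanSpace ℝ (Fin n)) (hu : ‖u‖ = 1)
    (hL : 0 ≤ L) :
    ENNReal.ofReal L * ENNReal.ofReal (ballVolume n 1) ≤ 2 * volume (tube q u L) := by
  calc ENNReal.ofReal L * ENNReal.ofReal (ballVolume n 1)
      = ∫⁻ s in Set.Icc 0 L, ∫⁻ _ in closedBall (q + s • u) 1, 1 := by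
        simp [volume_closedBall_eq_ofReal, mul_comm]
    _ = ∫⁻ x, volume.restrict (Set.Icc 0 L) {s : ℝ | dist x (q + s • u) ≤ 1} := by
        simpa using lintegral_setLIntegral_closedBall volume (volume.restrict (Set.Icc 0 L))
          (by fun_prop : Continuous fun s : ℝ => q + s • u) 1 (measurable_const (a := 1))
    _ ≤ ∫⁻ x, (tube q u L).indicator (fun _ => 2) x := by
        refine lintegral_mono fun x => ?_
        by_cases hx : x ∈ tube q u L
        · rw [Set.indicator_of_mem hx]
          exact (Measure.restrict_apply_le _ _).trans (volume_setOf_dist_line_le_one_le q x hu)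
        · rw [Set.indicator_of_notMem hx, nonpos_iff_eq_zero,
            Measure.restrict_apply' measurableSet_Icc]
          refine measure_mono_null (fun s hs => ?_) measure_empty
          exact hx (closedBall_subset_tube hs.2 hs.1)
    _ = 2 * volume (tube q u L) :=
        lintegral_indicator_const (isCompact_tube q u hL).measurableSet 2

theorem ofReal_add_two_mul_ballVolume_le (q : EuclideanSpace ℝ (Fin n)) (hu : ‖u‖ = 1)
    (hL : 0 ≤ L) :
    ENNReal.ofReal ((L + 2) * ballVolume n 1) ≤ 4 * volume (tube q u L) := by
  have hend : ENNReal.ofReal (ballVolume n 1) ≤ volume (tube q u L) := by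
    rw [← volume_closedBall_eq_ofReal (q + (0 : ℝ) • u) 1]
    exact measure_mono (closedBall_subset_tube ⟨le_rfl, hL⟩)
  calc ENNReal.ofReal ((L + 2) * ballVolume n 1)
      = ENNReal.ofReal L * ENNReal.ofReal (ballVolume n 1) +
          2 * ENNReal.ofReal (ballVolume n 1) := by
        rw [ENNReal.ofReal_mul (by positivity), ENNReal.ofReal_add hL zero_le_two, add_mul,
          ENNReal.ofReal_ofNat]
    _ ≤ 2 * volume (tube q u L) + 2 * volume (tube q u L) :=
        add_le_add (ofReal_mul_ballVolume_le q hu hL) (by gcongr)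
    _ = 4 * volume (tube q u L) := by ring

theorem seminorm_sub_le_of_mem_tube (p : Seminorm ℝ (EuclideanSpace ℝ (Fin n))) {A : ℝ}
    (hA : ∀ v, p v ≤ A * ‖v‖) (hA₀ : 0 ≤ A) {y : EuclideanSpace ℝ (Fin n)} (hL : 0 ≤ L)
    (hx : x ∈ tube q u L) (hy : y ∈ tube q u L) : p (y - x) ≤ L * p u + 2 * A := by
  obtain ⟨s, hs, hxs⟩ := (mem_tube_iff hL).mp hx
  obtain ⟨t, ht, hyt⟩ := (mem_tube_iff hL).mp hy
  rw [mem_closedBall, dist_eq_norm] at hxs hyt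
  have hradial : ∀ {z : EuclideanSpace ℝ (Fin n)}, ‖z‖ ≤ 1 → p z ≤ A := fun hz =>
    (hA _).trans (mul_le_of_le_one_right hA₀ hz)
  calc p (y - x)
      = p ((t - s) • u + (y - (q + t • u)) - (x - (q + s • u))) := by
        congr 1
        module
    _ ≤ p ((t - s) • u) + p (y - (q + t • u)) + p (x - (q + s • u)) :=
        (map_sub_le_add p _ _).trans (add_le_add_left (map_add_le_add p _ _) _)
    _ ≤ L * p u + A + A := by
        rw [map_smul_eq_mul, Real.norm_eq_abs]
        gcongr
        · exact abs_sub_le_iff.mpr ⟨by linarith [hs.1, ht.2], by linarith [hs.2, ht.1]⟩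
        · exact hradial hyt
        · exact hradial hxs
    _ = L * p u + 2 * A := by ring

end Tube

section LineBoundedField

open Metric

variable {n : ℕ} {H : EuclideanSpace ℝ (Fin n) → Seminorm ℝ (EuclideanSpace ℝ (Fin n))}
  (hH : Continuous fun z : EuclideanSpace ℝ (Fin n) × EuclideanSpace ℝ (Fin n) => H z.1 z.2)
  {M : ℝ} (hM : ∀ y u a b, a ≤ b → ∫ t in a..b, H (y + t • u) u ≤ M)
  {q u : EuclideanSpace ℝ (Fin n)} {L : ℝ}

include hH in
theorem measurable_ofReal_seminorm (u : EuclideanSpace ℝ (Fin n)) :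
    Measurable fun y => ENNReal.ofReal (H y u) :=
  (hH.comp (Continuous.prodMk_left u)).measurable.ennreal_ofReal

include hH hM

theorem lintegral_seminorm_line_le (y u : EuclideanSpace ℝ (Fin n)) :
    ∫⁻ t : ℝ, ENNReal.ofReal (H (y + t • u) u) ≤ ENNReal.ofReal M :=
  lintegral_ofReal_le_of_forall_intervalIntegral_le
    (hH.comp (by fun_prop : Continuous fun t : ℝ => (y + t • u, u)))
    (fun _ => apply_nonneg _ u) (hM y u)

theorem ballSeminorm_le_mul_norm (c v : EuclideanSpace ℝ (Fin n)) :
    ballSeminorm volume hH c v ≤ ballVolume n 2 * M * ‖v‖ := by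
  have hM₀ : 0 ≤ M := by simpa using hM 0 0 0 0 le_rfl
  have hunit : ∀ u, ‖u‖ = 1 → ballSeminorm volume hH c u ≤ ballVolume n 2 * M := fun u hu => by
    rw [← ENNReal.ofReal_le_ofReal_iff (mul_nonneg (ballVolume_nonneg n 2) hM₀),
      ofReal_ballSeminorm, ← tube_zero c u, ENNReal.ofReal_mul (ballVolume_nonneg n 2)]
    exact setLIntegral_tube_le c hu le_rfl (measurable_ofReal_seminorm hH u)
      fun y => lintegral_seminorm_line_le hH hM y u
  rcases eq_or_ne v 0 with rfl | hv
  · simp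
  · calc ballSeminorm volume hH c v
        = ‖v‖ * ballSeminorm volume hH c (‖v‖⁻¹ • v) := by
          rw [map_smul_eq_mul, norm_inv, norm_norm, mul_inv_cancel_left₀ (norm_ne_zero_iff.mpr hv)]
      _ ≤ ‖v‖ * (ballVolume n 2 * M) := by
          gcongr
          exact hunit _ (norm_smul_inv_norm hv)
      _ = ballVolume n 2 * M * ‖v‖ := mul_comm _ _

variable {c : EuclideanSpace ℝ (Fin n) → EuclideanSpace ℝ (Fin n)}

theorem mul_volume_setOf_le_ballSeminorm_le (hu : ‖u‖ = 1) (hL : 0 ≤ L)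
    (hc : ∀ x ∈ tube q u L, x ∈ closedBall (c x) 1) (θ : ℝ) :
    ENNReal.ofReal θ * volume {x ∈ tube q u L | θ ≤ ballSeminorm volume hH (c x) u} ≤
      ENNReal.ofReal (ballVolume n 2 ^ 2 * M) := by
  set g : EuclideanSpace ℝ (Fin n) → ℝ≥0∞ := fun x =>
    ∫⁻ y in closedBall x 2, ENNReal.ofReal (H y u)
  have hHu : Measurable fun y => ENNReal.ofReal (H y u) := measurable_ofReal_seminorm hH u
  have hg : Measurable g := by
    have htranslate : g = fun x => ∫⁻ y in closedBall 0 2, ENNReal.ofReal (H (y + x) u) := by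
      ext x
      simpa using setLIntegral_closedBall_add 0 x 2 hHu
    rw [htranslate]
    exact Measurable.lintegral_prod_left' (hHu.comp measurable_add)
  -- Enlarging the ball around `c x` to one around `x` removes the dependence on the choice of `c`.
  have hsubset : {x ∈ tube q u L | θ ≤ ballSeminorm volume hH (c x) u} ⊆
      {x | ENNReal.ofReal θ ≤ g x} ∩ tube q u L := fun x ⟨hx, hθ⟩ => by
    refine ⟨(ENNReal.ofReal_le_ofReal hθ).trans ?_, hx⟩
    rw [ofReal_ballSeminorm]
    exact lintegral_mono_set (closedBall_subset_closedBall' (by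
      linarith [mem_closedBall'.mp (hc x hx)]))
  calc ENNReal.ofReal θ * volume {x ∈ tube q u L | θ ≤ ballSeminorm volume hH (c x) u}
      ≤ ENNReal.ofReal θ * volume.restrict (tube q u L) {x | ENNReal.ofReal θ ≤ g x} := by
        rw [Measure.restrict_apply (measurableSet_le measurable_const hg)]
        gcongr
    _ ≤ ∫⁻ x in tube q u L, g x := mul_meas_ge_le_lintegral hg _
    _ ≤ ENNReal.ofReal (ballVolume n 2) * (ENNReal.ofReal (ballVolume n 2) * ENNReal.ofReal M) :=
        setLIntegral_tube_le q hu hL hg fun z =>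
          lintegral_setLIntegral_closedBall_line_le z u 2 hHu
            fun y => lintegral_seminorm_line_le hH hM y u
    _ = ENNReal.ofReal (ballVolume n 2 ^ 2 * M) := by
        rw [sq, mul_assoc, ENNReal.ofReal_mul (ballVolume_nonneg n 2),
          ENNReal.ofReal_mul (ballVolume_nonneg n 2)]

theorem tube_subset_image_seminormBox (hL : 0 ≤ L) {x : EuclideanSpace ℝ (Fin n)}
    (hx : x ∈ tube q u L) {r δ σ : ℝ} (hσ : 0 < σ) (hr : ∀ y ∈ tube q u L, ‖y - x‖ ≤ σ * r)
    (hδ : 4 * (ballVolume n 2 * M) ≤ σ * δ) {z : EuclideanSpace ℝ (Fin n)}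
    (hz : 2 * L * ballSeminorm volume hH z u ≤ σ * δ) :
    tube q u L ⊆ (fun y => x + σ • y) '' seminormBox (ballSeminorm volume hH z) r δ := by
  have hM₀ : 0 ≤ M := by simpa using hM 0 0 0 0 le_rfl
  refine fun y hy => (mem_image_add_smul_seminormBox hσ).mpr ⟨hr y hy, ?_⟩
  have hvary := seminorm_sub_le_of_mem_tube _ (ballSeminorm_le_mul_norm hH hM z)
    (mul_nonneg (ballVolume_nonneg n 2) hM₀) hL hx hy
  linarith

theorem volume_setOf_not_tube_subset_le (hu : ‖u‖ = 1) (hL : 0 ≤ L)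
    (hc : ∀ x ∈ tube q u L, x ∈ closedBall (c x) 1) {r δ σ : ℝ} (hδ : 0 < δ) (hσ : 0 < σ)
    (hr : ∀ x ∈ tube q u L, ∀ y ∈ tube q u L, ‖y - x‖ ≤ σ * r)
    (hMδ : 4 * (ballVolume n 2 * M) ≤ σ * δ) :
    volume {x ∈ tube q u L | ¬ tube q u L ⊆ (fun y => x + σ • y) ''
        seminormBox (ballSeminorm volume hH (c x)) r δ} ≤
      ENNReal.ofReal (8 * ballVolume n 2 ^ 2 * M / (δ * ballVolume n 1) * σ⁻¹) *
        volume (tube q u L) := by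
  have hM₀ : 0 ≤ M := by simpa using hM 0 0 0 0 le_rfl
  have hβ : 0 < ballVolume n 1 := ballVolume_pos n one_pos
  set θ := σ * δ / (2 * (L + 2)) with hθ
  have hθ₀ : 0 < θ := by positivity
  have hsubset : {x ∈ tube q u L | ¬ tube q u L ⊆ (fun y => x + σ • y) ''
      seminormBox (ballSeminorm volume hH (c x)) r δ} ⊆
        {x ∈ tube q u L | θ ≤ ballSeminorm volume hH (c x) u} := fun x ⟨hx, hnot⟩ => by
    refine ⟨hx, le_of_not_ge fun hle => hnot ?_⟩
    refine tube_subset_image_seminormBox hH hM hL hx hσ (hr x hx) hMδ ?_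
    rw [hθ, le_div_iff₀ (by positivity)] at hle
    linarith [apply_nonneg (ballSeminorm volume hH (c x)) u]
  calc volume {x ∈ tube q u L | ¬ tube q u L ⊆ (fun y => x + σ • y) ''
        seminormBox (ballSeminorm volume hH (c x)) r δ}
      ≤ ENNReal.ofReal θ⁻¹ * (ENNReal.ofReal θ *
          volume {x ∈ tube q u L | θ ≤ ballSeminorm volume hH (c x) u}) := by
        rw [← mul_assoc, ← ENNReal.ofReal_mul (by positivity), inv_mul_cancel₀ hθ₀.ne',
          ENNReal.ofReal_one, one_mul]
        exact measure_mono hsubset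
    _ ≤ ENNReal.ofReal θ⁻¹ * ENNReal.ofReal (ballVolume n 2 ^ 2 * M) := by
        gcongr
        exact mul_volume_setOf_le_ballSeminorm_le hH hM hu hL hc θ
    _ = ENNReal.ofReal (2 * ballVolume n 2 ^ 2 * M / (δ * ballVolume n 1) * σ⁻¹) *
          ENNReal.ofReal ((L + 2) * ballVolume n 1) := by
        rw [← ENNReal.ofReal_mul (by positivity), ← ENNReal.ofReal_mul (by positivity)]
        congr 1
        rw [hθ]
        field_simp
    _ ≤ ENNReal.ofReal (2 * ballVolume n 2 ^ 2 * M / (δ * ballVolume n 1) * σ⁻¹) *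
          (4 * volume (tube q u L)) := by
        gcongr
        exact ofReal_add_two_mul_ballVolume_le q hu hL
    _ = _ := by
        rw [← mul_assoc, ← ENNReal.ofReal_ofNat 4, ← ENNReal.ofReal_mul (by positivity)]
        congr 2
        ring

end LineBoundedField

section BoxEstimate

open Metric

/-- The level `ε` of the boxes `{p ≤ ε}`, small enough for `measureReal_seminormBox_le` when the
constant there is the `10890` of `exists_seminorm_field`. -/
noncomputable def boxLevel (n : ℕ) : ℝ := ballVolume n (1 / 2) / (2 * 10890)

theorem boxLevel_pos (n : ℕ) : 0 < boxLevel n :=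
  div_pos (ballVolume_pos n (by norm_num)) (by norm_num)

/-- The constant `C(n)` of the box estimate. For `σ ≤ C(n)` the estimate is trivial; for
larger `σ` the last two summands absorb the ends of a tube and the Markov inequality along it. -/
noncomputable def boxConstant (n : ℕ) : ℝ :=
  1 + 320 * n * ballVolume n 2 / boxLevel n +
    640 * n * ballVolume n 2 ^ 2 / (boxLevel n * ballVolume n 1)

theorem boxConstant_summand_nonneg (n : ℕ) :
    0 ≤ 320 * n * ballVolume n 2 / boxLevel n ∧
      0 ≤ 640 * n * ballVolume n 2 ^ 2 / (boxLevel n * ballVolume n 1) := by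
  have hε := boxLevel_pos n
  have hβ₁ := ballVolume_nonneg n 1
  have hβ₂ := ballVolume_nonneg n 2
  constructor <;> positivity

theorem one_le_boxConstant (n : ℕ) : 1 ≤ boxConstant n := by
  rw [boxConstant]
  linarith [boxConstant_summand_nonneg n]

variable {n d : ℕ}

theorem four_mul_add_one_le (hn : n ≠ 0) (hd : d ≠ 0) : 4 * ((n : ℝ) * d) + 1 ≤ 5 * (n * d) := by
  have hnd : 1 ≤ n * d := Nat.one_le_iff_ne_zero.mpr (mul_ne_zero hn hd)
  have hnd' : (1 : ℝ) ≤ n * d := mod_cast hnd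
  linarith

theorem four_mul_ballVolume_mul_le (hn : n ≠ 0) (hd : d ≠ 0) {σ : ℝ} (hσ : boxConstant n ≤ σ) :
    4 * (ballVolume n 2 * (4 * (n * d) + 1)) ≤ σ * (d / 16 * boxLevel n) := by
  have hsummand : 320 * n * ballVolume n 2 / boxLevel n ≤ σ := by
    rw [boxConstant] at hσ
    linarith [boxConstant_summand_nonneg n]
  calc 4 * (ballVolume n 2 * (4 * (n * d) + 1))
      ≤ 4 * (ballVolume n 2 * (5 * (n * d))) := by
        gcongr
        · exact ballVolume_nonneg n 2
        · exact four_mul_add_one_le hn hd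
    _ = 320 * n * ballVolume n 2 * (d / 16) := by ring
    _ ≤ σ * boxLevel n * (d / 16) :=
        mul_le_mul_of_nonneg_right ((div_le_iff₀ (boxLevel_pos n)).mp hsummand) (by positivity)
    _ = σ * (d / 16 * boxLevel n) := by ring

theorem eight_mul_ballVolume_sq_mul_div_le (hn : n ≠ 0) (hd : d ≠ 0) :
    8 * ballVolume n 2 ^ 2 * (4 * (n * d) + 1) / (d / 16 * boxLevel n * ballVolume n 1) ≤
      boxConstant n := by
  have hε := boxLevel_pos n
  have hβ := ballVolume_pos n one_pos
  calc 8 * ballVolume n 2 ^ 2 * (4 * (n * d) + 1) / (d / 16 * boxLevel n * ballVolume n 1)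
      ≤ 8 * ballVolume n 2 ^ 2 * (5 * (n * d)) / (d / 16 * boxLevel n * ballVolume n 1) := by
        gcongr
        exact four_mul_add_one_le hn hd
    _ = 640 * n * ballVolume n 2 ^ 2 / (boxLevel n * ballVolume n 1) := by
        field_simp
        ring
    _ ≤ boxConstant n := by
        rw [boxConstant]
        linarith [boxConstant_summand_nonneg n]

theorem volume_setOf_not_tube_subset_le_boxConstant (hn : n ≠ 0) (hd : d ≠ 0)
    {H : EuclideanSpace ℝ (Fin n) → Seminorm ℝ (EuclideanSpace ℝ (Fin n))}
    (hH : Continuous fun z : EuclideanSpace ℝ (Fin n) × EuclideanSpace ℝ (Fin n) => H z.1 z.2)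
    (hM : ∀ y u a b, a ≤ b → ∫ t in a..b, H (y + t • u) u ≤ 4 * (n * d) + 1)
    {q u : EuclideanSpace ℝ (Fin n)} {L : ℝ} (hu : ‖u‖ = 1) (hL : 0 ≤ L)
    {c : EuclideanSpace ℝ (Fin n) → EuclideanSpace ℝ (Fin n)}
    (hc : ∀ x ∈ tube q u L, x ∈ closedBall (c x) 1)
    (hdiam : ∀ x ∈ tube q u L, ∀ y ∈ tube q u L, ‖y - x‖ ≤ d / 16 * (1 / 2)) {σ : ℝ}
    (hσ : 0 < σ) :
    volume {x ∈ tube q u L | ¬ tube q u L ⊆ (fun y => x + σ • y) ''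
        seminormBox (ballSeminorm volume hH (c x)) (d / 16 * (1 / 2)) (d / 16 * boxLevel n)} ≤
      ENNReal.ofReal (boxConstant n * σ⁻¹) * volume (tube q u L) := by
  rcases le_total σ (boxConstant n) with hle | hge
  · refine (measure_mono (Set.sep_subset _ _)).trans (le_mul_of_one_le_left' ?_)
    rwa [ENNReal.one_le_ofReal, ← div_eq_mul_inv, one_le_div₀ hσ]
  · have : (0 : ℝ) < d := mod_cast Nat.pos_of_ne_zero hd
    have hδ : 0 < d / 16 * boxLevel n := mul_pos (by positivity) (boxLevel_pos n)
    refine (volume_setOf_not_tube_subset_le hH hM hu hL hc hδ hσ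
      (fun x hx y hy => (hdiam x hx y hy).trans ?_)
      (four_mul_ballVolume_mul_le hn hd hge)).trans ?_
    · exact le_mul_of_one_le_left (by positivity) ((one_le_boxConstant n).trans hge)
    · gcongr
      exact eight_mul_ballVolume_sq_mul_div_le hn hd

theorem div_sixteen_pow_mul_le (hn : n ≠ 0) (d : ℕ) {N : ℝ} (hN : 0 ≤ N) :
    (d / 16 : ℝ) ^ n * (4 * (4 * N / (d + 1) ^ n)) ≤ N := by
  calc (d / 16 : ℝ) ^ n * (4 * (4 * N / (d + 1) ^ n))
      = 16 / 16 ^ n * (d / (d + 1)) ^ n * N := by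
        rw [div_pow, div_pow]
        ring
    _ ≤ 1 * 1 * N := by
        gcongr
        · exact (div_le_one₀ (by positivity)).mpr (le_self_pow₀ (by norm_num) hn)
        · exact pow_le_one₀ (by positivity) ((div_le_one₀ (by positivity)).mpr (by linarith))
    _ = N := by ring

theorem exists_seminorm_field_box_volume_le (hn : n ≠ 0) (hd : d ≠ 0)
    {X : Set (EuclideanSpace ℝ (Fin n))} (hX : Bornology.IsBounded X) :
    ∃ (H : EuclideanSpace ℝ (Fin n) → Seminorm ℝ (EuclideanSpace ℝ (Fin n)))
      (hH : Continuous fun z : EuclideanSpace ℝ (Fin n) × EuclideanSpace ℝ (Fin n) => H z.1 z.2),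
      (∀ y u a b, a ≤ b → ∫ t in a..b, H (y + t • u) u ≤ 4 * (n * d) + 1) ∧
      ∀ c, closedBall c 1 ⊆ X → ∀ x, volume ((fun y => x + y) ''
        seminormBox (ballSeminorm volume hH c) (d / 16 * (1 / 2)) (d / 16 * boxLevel n)) ≤
          volume X := by
  have hXfin : volume X ≠ ∞ := hX.measure_lt_top.ne
  obtain ⟨H, ρ, hH, hM, hρ, hρ₀, hlower, hQ⟩ := exists_seminorm_field n d hXfin
  refine ⟨H, hH, hM, fun c hcX x => ?_⟩
  have : (0 : ℝ) < d := mod_cast Nat.pos_of_ne_zero hd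
  have hρX : ∀ y, IntegrableOn (ρ y) X := fun y =>
    ((hρ.comp (Continuous.prodMk_right y)).continuousOn.integrableOn_compact
      hX.isCompact_closure).mono_set subset_closure
  have hbox : volume.real (seminormBox (ballSeminorm volume hH c) (1 / 2) (boxLevel n)) ≤
      4 * (4 * volume.real X / (d + 1) ^ n) := by
    refine measureReal_seminormBox_le hH hρ (by norm_num) hlower hρ₀ c ?_ fun y =>
      (setIntegral_mono_set (hρX y) (ae_of_all _ (hρ₀ y)) (ae_of_all _ hcX)).trans (hQ y)
    rw [Measure.real, volume_closedBall_eq_ofReal, ENNReal.toReal_ofReal (ballVolume_nonneg n _),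
      boxLevel]
    linarith
  have hfin := (isCompact_seminormBox (continuous_ballSeminorm volume hH c) (1 / 2)
    (boxLevel n)).measure_ne_top (μ := volume)
  rw [addHaar_image_add_seminormBox volume _ _ _ (by positivity), finrank_euclideanSpace_fin,
    ← ofReal_measureReal hfin, ← ENNReal.ofReal_mul (by positivity), ← ofReal_measureReal hXfin]
  gcongr
  exact (mul_le_mul_of_nonneg_left hbox (by positivity)).trans
    (div_sixteen_pow_mul_le hn d measureReal_nonneg)

theorem box_estimate_general (hn : n ≠ 0) :
    ∃ C : ℝ, 0 < C ∧ ∀ X : Set (EuclideanSpace ℝ (Fin n)), Bornology.IsBounded X →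
      (∀ x ∈ X, ∃ c, x ∈ closedBall c 1 ∧ closedBall c 1 ⊆ X) →
      ∃ K : EuclideanSpace ℝ (Fin n) → Set (EuclideanSpace ℝ (Fin n)),
        (∀ x ∈ X, Convex ℝ (K x) ∧ IsCompact (K x) ∧ (interior (K x)).Nonempty ∧
          (∀ y, y ∈ K x ↔ -y ∈ K x) ∧ volume ((fun y => x + y) '' K x) ≤ volume X) ∧
        ∀ (q u : EuclideanSpace ℝ (Fin n)) (L : ℝ), 0 ≤ L → ‖u‖ = 1 → tube q u L ⊆ X →
          ∀ σ : ℝ, 0 < σ →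
            volume {x ∈ tube q u L | ¬ tube q u L ⊆ (fun y => x + σ • y) '' K x}
              ≤ ENNReal.ofReal (C * σ⁻¹) * volume (tube q u L) := by
  refine ⟨boxConstant n, one_pos.trans_le (one_le_boxConstant n), fun X hX hballs => ?_⟩
  choose! c hc hcX using hballs
  obtain ⟨d, hd⟩ := exists_nat_ge (max 1 (32 * diam X))
  have hd₀ : (0 : ℝ) < d := one_pos.trans_le ((le_max_left _ _).trans hd)
  have hdne : d ≠ 0 := mod_cast hd₀.ne'
  have hdiam : diam X ≤ d / 16 * (1 / 2) := by linarith [(le_max_right _ _).trans hd]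
  obtain ⟨H, hH, hM, hvol⟩ := exists_seminorm_field_box_volume_le hn hdne hX
  have hG : ∀ x, Continuous (ballSeminorm volume hH (c x)) := fun x =>
    continuous_ballSeminorm volume hH (c x)
  refine ⟨fun x => seminormBox (ballSeminorm volume hH (c x)) (d / 16 * (1 / 2))
    (d / 16 * boxLevel n), fun x hx => ⟨convex_seminormBox _ _ _, isCompact_seminormBox (hG x) _ _,
    nonempty_interior_seminormBox (hG x) (by positivity) (mul_pos (by positivity) (boxLevel_pos n)),
    fun y => neg_mem_seminormBox.symm, hvol (c x) (hcX x hx) x⟩, ?_⟩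
  refine fun q u L hL hu hT σ hσ => volume_setOf_not_tube_subset_le_boxConstant hn hdne hH hM hu hL
    (fun x hx => hc x (hT hx)) (fun x hx y hy => ?_) hσ
  rw [← dist_eq_norm]
  exact (dist_le_diam_of_mem hX (hT hy) (hT hx)).trans hdiam

end BoxEstimate

/-- **Box estimate (planiness).** If `X` is a finite union of cylinders of radius 1 and length
`L ≥ C(n)`, then for each `x ∈ X` there is a centrally symmetric convex body `K(x)`, with
`B(x) := x + K(x)` of volume at most `Vol(X)`, such that for every cylinder `T ⊆ X` of radius 1
and length `L` and every `σ > 0`, the set of `x ∈ T` for which `T ⊄ x + σ • K(x)` has measure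
at most `C(n) σ⁻¹ Vol(T)`. -/
theorem box_estimate (n : ℕ) (hn : 2 ≤ n) :
    ∃ C : ℝ, 0 < C ∧
      ∀ (L : ℝ), C ≤ L →
      ∀ (m : ℕ) (p w : Fin m → EuclideanSpace ℝ (Fin n)),
        (∀ i, ‖w i‖ = 1) →
        ∃ K : EuclideanSpace ℝ (Fin n) → Set (EuclideanSpace ℝ (Fin n)),
          (∀ x ∈ ⋃ i, tube (p i) (w i) L,
            Convex ℝ (K x) ∧ IsCompact (K x) ∧ (interior (K x)).Nonempty ∧
            (∀ y, y ∈ K x ↔ -y ∈ K x) ∧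
            volume ((fun y => x + y) '' K x) ≤ volume (⋃ i, tube (p i) (w i) L)) ∧
          (∀ (q u : EuclideanSpace ℝ (Fin n)), ‖u‖ = 1 →
            tube q u L ⊆ ⋃ i, tube (p i) (w i) L →
            ∀ σ : ℝ, 0 < σ →
              volume {x ∈ tube q u L | ¬ tube q u L ⊆ (fun y => x + σ • y) '' K x}
                ≤ ENNReal.ofReal (C * σ⁻¹) * volume (tube q u L)) := by
  obtain ⟨C, hC, hbox⟩ := box_estimate_general (n := n) (by lia)
  refine ⟨C, hC, fun L hCL m p w _ => ?_⟩
  have hL : 0 ≤ L := hC.le.trans hCL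
  obtain ⟨K, hK, hbad⟩ := hbox (⋃ i, tube (p i) (w i) L) (isBounded_iUnion_tube p w hL)
    fun x => exists_closedBall_subset_iUnion_tube hL
  exact ⟨K, hK, fun q u => hbad q u L hL⟩
end

section
/- (Polynomial ham sandwich theorem, Stone–Tukey) Let n, d ≥ 1 and let N = binomial(n+d, d) − 1. Let U_1, …, U_N be open subsets of ℝ^n, each of finite Lebesgue measure. Then there exists a nonzero real polynomial P in n variables of total degree at most d such that P bisects each U_i, i.e. Vol{x ∈ U_i : P(x) > 0} = Vol{x ∈ U_i : P(x) < 0} for every i = 1, …, N. -/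
open MeasureTheory
open scoped ENNReal

/-!
Odd-degree systems `x_i ^ d + t * p_i(x) = 0` with `deg p_i ≤ d` have real solutions for all but
countably many `t`. Put `g_i = X_i ^ d + t * p_i` and replace each factor `X_i ^ d` of a monomial by
`g_i`. This is a linear endomorphism of `ℝ[X]` preserving the degree filtration, and on each step
its determinant is a polynomial in `t` with value `1` at `t = 0`. So for all but countably many `t`
it is bijective and identifies `ℝ[X] / (X_i ^ d)` with `ℝ[X] / (g_i)`, which then has odd dimension.
As the residue fields are `ℝ` or `ℂ`, an odd-dimensional algebra has a real point.

Letting `t → ∞` and homogenising, `N` forms of the same odd degree in `N + 1` variables have a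
common zero on the unit sphere. Polynomial approximation turns this into the Borsuk–Ulam theorem.
The ham sandwich theorem follows by applying Borsuk–Ulam to `P ↦ (μ_i {P > 0} - μ_i {P < 0})_i` on
the sphere of an `(N + 1)`-dimensional space of polynomials; this map is continuous because the
zero set of a nonzero polynomial is null.
-/

section RealPoints

open MvPolynomial

variable {A : Type*} [CommRing A] [Algebra ℝ A] [Module.Finite ℝ A]

lemma finrank_eq_two_of_isSimpleModule [IsEmpty (A →ₐ[ℝ] ℝ)] (S : Type*) [AddCommGroup S]
    [Module A S] [Module ℝ S] [IsScalarTower ℝ A S] [IsSimpleModule A S] :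
    Module.finrank ℝ S = 2 := by
  obtain ⟨m, hm, ⟨e⟩⟩ := isSimpleModule_iff_quot_maximal.1 ‹IsSimpleModule A S›
  let _ := Ideal.Quotient.field m
  have : Algebra.IsAlgebraic ℝ (A ⧸ m) := Algebra.IsAlgebraic.of_finite _ _
  rw [(e.restrictScalars ℝ).finrank_eq]
  rcases Real.nonempty_algEquiv_or (A ⧸ m) with ⟨⟨f⟩⟩ | ⟨⟨f⟩⟩
  · exact isEmptyElim (f.toAlgHom.comp (Ideal.Quotient.mkₐ ℝ m))
  · rw [f.toLinearEquiv.finrank_eq, Complex.finrank_real_complex]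

lemma even_finrank_of_isEmpty_algHom [IsEmpty (A →ₐ[ℝ] ℝ)] (M : Type*) [AddCommGroup M]
    [Module A M] [Module ℝ M] [IsScalarTower ℝ A M] [Module.Finite ℝ M] :
    Even (Module.finrank ℝ M) := by
  induction hn : Module.finrank ℝ M using Nat.strong_induction_on generalizing M with
  | _ n ih =>
    subst hn
    rcases subsingleton_or_nontrivial M with _ | _
    · simp [Module.finrank_zero_of_subsingleton]
    have : IsArtinian A M := isArtinian_of_tower ℝ inferInstance
    obtain ⟨S, hS⟩ := IsAtomic.exists_atom (Submodule A M)
    have : IsSimpleModule A S := isSimpleModule_iff_isAtom.2 hS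
    have hadd : Module.finrank ℝ (M ⧸ S) + Module.finrank ℝ S = Module.finrank ℝ M :=
      (S.restrictScalars ℝ).finrank_quotient_add_finrank
    rw [finrank_eq_two_of_isSimpleModule (A := A) S] at hadd
    rw [← hadd]
    exact (ih _ (by lia) (M ⧸ S) rfl).add even_two

lemma nonempty_algHom_of_odd_finrank (hA : Odd (Module.finrank ℝ A)) : Nonempty (A →ₐ[ℝ] ℝ) := by
  by_contra h
  have := not_nonempty_iff.1 h
  exact Nat.not_even_iff_odd.2 hA (even_finrank_of_isEmpty_algHom (A := A) A)

lemma exists_forall_eval_eq_zero_of_odd_finrank {σ : Type*} (I : Ideal (MvPolynomial σ ℝ))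
    (hI : Odd (Module.finrank ℝ (MvPolynomial σ ℝ ⧸ I))) :
    ∃ x : σ → ℝ, ∀ p ∈ I, eval x p = 0 := by
  have : Module.Finite ℝ (MvPolynomial σ ℝ ⧸ I) := Module.finite_of_finrank_pos hI.pos
  obtain ⟨φ⟩ := nonempty_algHom_of_odd_finrank hI
  let ψ := φ.comp (Ideal.Quotient.mkₐ ℝ I)
  refine ⟨fun i => ψ (X i), fun p hp => ?_⟩
  calc eval (fun i => ψ (X i)) p = ψ p := (DFunLike.congr_fun (aeval_unique ψ) p).symm
    _ = φ (Ideal.Quotient.mk I p) := rfl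
    _ = 0 := by rw [Ideal.Quotient.eq_zero_iff_mem.2 hp, map_zero]

end RealPoints

section MonomialCount

open MvPolynomial

variable {σ R : Type*} [CommRing R]

lemma mem_span_range_X_pow_iff {d : ℕ} {p : MvPolynomial σ R} :
    p ∈ Ideal.span (Set.range fun i => X i ^ d) ↔ ∀ m ∈ p.support, ∃ i, d ≤ m i := by
  have : (Set.range fun i => (X i ^ d : MvPolynomial σ R)) =
      (fun s => monomial s (1 : R)) '' Set.range fun i : σ => Finsupp.single i d := by
    rw [← Set.range_comp]
    simp only [X_pow_eq_monomial, Function.comp_def]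
  simp [this, mem_ideal_span_monomial_image]

lemma isCompl_restrictSupport {s t : Set (σ →₀ ℕ)} (h : IsCompl s t) :
    IsCompl (restrictSupport R s) (restrictSupport R t) :=
  (Submodule.orderIsoMapComap (AddMonoidAlgebra.coeffLinearEquiv R)).symm.isCompl
    (x := Finsupp.supported R R s) (y := Finsupp.supported R R t)
    ⟨Finsupp.disjoint_supported_supported h.disjoint,
      Finsupp.codisjoint_supported_supported h.codisjoint⟩

lemma basisRestrictSupport_repr_apply {s : Set (σ →₀ ℕ)} (q : restrictSupport R s) (m : s) :
    (basisRestrictSupport R s).repr q m = coeff m.1 q.1 :=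
  rfl

lemma coe_basisRestrictSupport_apply (s : Set (σ →₀ ℕ)) (m : s) :
    (basisRestrictSupport R s m : MvPolynomial σ R) = monomial m.1 1 := by
  classical
  have hm : monomial m.1 (1 : R) ∈ restrictSupport R s :=
    (mem_restrictSupport_iff R).2 <| (Finset.coe_subset.2 support_monomial_subset).trans (by simp)
  suffices h : basisRestrictSupport R s m = ⟨monomial m.1 1, hm⟩ by rw [h]
  rw [Module.Basis.apply_eq_iff]
  ext m'
  simp [basisRestrictSupport_repr_apply, coeff_monomial, Finsupp.single_apply, Subtype.ext_iff]

lemma finrank_restrictSupport [StrongRankCondition R] (s : Set (σ →₀ ℕ)) :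
    Module.finrank R (restrictSupport R s) = Nat.card s :=
  Module.finrank_eq_nat_card_basis (basisRestrictSupport R s)

lemma card_setOf_forall_lt [Fintype σ] (d : ℕ) :
    Nat.card {m : σ →₀ ℕ | ∀ i, m i < d} = d ^ Fintype.card σ := by
  have e : {m : σ →₀ ℕ | ∀ i, m i < d} ≃ (σ → Fin d) :=
    (Finsupp.equivFunOnFinite.subtypeEquiv fun _ => Iff.rfl).trans
      ((Equiv.subtypePiEquivPi).trans (Equiv.piCongrRight fun _ => Fin.equivSubtype.symm))
  rw [Nat.card_congr e, Nat.card_fun]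
  simp

lemma finrank_quotient_span_range_X_pow [Fintype σ] [StrongRankCondition R] (d : ℕ) :
    Module.finrank R (MvPolynomial σ R ⧸
      Ideal.span (Set.range fun i : σ => (X i : MvPolynomial σ R) ^ d)) = d ^ Fintype.card σ := by
  have hsupp :
      (Ideal.span (Set.range fun i : σ => (X i : MvPolynomial σ R) ^ d)).restrictScalars R =
        restrictSupport R {m | ∀ i, m i < d}ᶜ := by
    ext p
    simp [mem_span_range_X_pow_iff, mem_restrictSupport_iff, Set.subset_def]
  have hcompl : IsCompl ((Ideal.span (Set.range fun i => X i ^ d)).restrictScalars R)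
      (restrictSupport R {m | ∀ i, m i < d}) :=
    hsupp ▸ isCompl_restrictSupport isCompl_compl.symm
  rw [← card_setOf_forall_lt, ← finrank_restrictSupport (R := R)]
  exact (Submodule.quotientEquivOfIsCompl _ _ hcompl).finrank_eq

lemma card_setOf_degree_le [Fintype σ] (d : ℕ) :
    Nat.card {m : σ →₀ ℕ | m.degree ≤ d} = (Fintype.card σ + d).choose d := by
  have hsum (P : Option σ →₀ ℕ) : (P.sum fun _ => id) = P none + P.some.degree := by
    rw [Finsupp.sum_fintype _ _ (by simp), Fintype.sum_option, Finsupp.degree_eq_sum]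
    simp
  let e : {m : σ →₀ ℕ | m.degree ≤ d} ≃ {P : Option σ →₀ ℕ // (P.sum fun _ => id) = d} :=
    { toFun := fun m => ⟨m.1.optionElim (d - m.1.degree), by
        rw [hsum, Finsupp.optionElim_apply_none, Finsupp.some_optionElim,
          Nat.sub_add_cancel m.2]⟩
      invFun := fun P => ⟨P.1.some, le_of_add_le_right ((hsum P.1).symm.trans P.2).le⟩
      left_inv := fun m => by simp
      right_inv := fun P => by
        have hnone : d - P.1.some.degree = P.1 none := by
          have := (hsum P.1).symm.trans P.2
          lia
        ext (_ | i) <;> simp [hnone] }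
  classical
  rw [Nat.card_congr (e.trans (Sym.equivNatSum (Option σ) d).symm), Nat.card_eq_fintype_card,
    Sym.card_sym_eq_choose, Fintype.card_option]
  congr 1
  lia

lemma finrank_restrictTotalDegree [Fintype σ] [StrongRankCondition R] (d : ℕ) :
    Module.finrank R (restrictTotalDegree σ R d) = (Fintype.card σ + d).choose d :=
  (finrank_restrictSupport _).trans (card_setOf_degree_le d)

end MonomialCount

section PowerReplacement

open MvPolynomial

lemma totalDegree_X_pow_add_C_mul_le {σ R : Type*} [CommRing R] {d : ℕ} {p : MvPolynomial σ R}
    (hp : p.totalDegree ≤ d) (i : σ) (t : R) : (X i ^ d + C t * p).totalDegree ≤ d := by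
  rcases subsingleton_or_nontrivial R with _ | _
  · simp [Subsingleton.elim (X i ^ d + C t * p) 0]
  refine (totalDegree_add _ _).trans (max_le (totalDegree_X_pow i d).le ?_)
  exact (totalDegree_mul _ _).trans (by simpa using hp)

variable {σ R S : Type*} [Fintype σ] [CommRing R] [CommRing S] {d : ℕ}
  {g : σ → MvPolynomial σ R}

variable (d g) in
/-- The linear endomorphism of the polynomial ring that replaces `X i ^ d` by `g i` as often as
possible in every monomial. It carries the ideal spanned by the `X i ^ d` into the ideal spanned by
the `g i`. For `d = 0` nothing is replaced, since then `m i % d = m i` and `m i / d = 0`. -/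
noncomputable def replacePow : MvPolynomial σ R →ₗ[R] MvPolynomial σ R :=
  (basisMonomials σ R).constr R fun m => ∏ i, X i ^ (m i % d) * g i ^ (m i / d)

lemma replacePow_monomial_one (m : σ →₀ ℕ) :
    replacePow d g (monomial m 1) = ∏ i, X i ^ (m i % d) * g i ^ (m i / d) :=
  (basisMonomials σ R).constr_basis R _ m

lemma replacePow_X_pow_mul (hd : 0 < d) (i : σ) (q : MvPolynomial σ R) :
    replacePow d g (X i ^ d * q) = g i * replacePow d g q := by
  classical
  suffices h : replacePow d g ∘ₗ LinearMap.mulLeft R (X i ^ d) =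
      LinearMap.mulLeft R (g i) ∘ₗ replacePow d g from LinearMap.congr_fun h q
  refine (basisMonomials σ R).ext fun m => ?_
  simp only [coe_basisMonomials, LinearMap.comp_apply, LinearMap.mulLeft_apply]
  rw [X_pow_eq_monomial, monomial_mul, one_mul, replacePow_monomial_one, replacePow_monomial_one,
    ← Finset.mul_prod_erase _ _ (Finset.mem_univ i),
    ← Finset.mul_prod_erase (s := Finset.univ) (a := i) _ (Finset.mem_univ i), ← mul_assoc]
  congr 1
  · simp only [Finsupp.coe_add, Pi.add_apply, Finsupp.single_eq_same, Nat.add_mod_left,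
      Nat.add_div_left _ hd, pow_succ]
    ring
  · refine Finset.prod_congr rfl fun j hj => ?_
    simp [Finsupp.single_eq_of_ne (Finset.ne_of_mem_erase hj)]

lemma replacePow_X_pow : replacePow d (fun i : σ => (X i ^ d : MvPolynomial σ R)) = .id := by
  refine (basisMonomials σ R).ext fun m => ?_
  simp only [coe_basisMonomials, LinearMap.id_apply]
  rw [replacePow_monomial_one, monomial_eq, C_1, one_mul,
    Finsupp.prod_fintype _ _ fun _ => pow_zero _]
  exact Finset.prod_congr rfl fun i _ => by rw [← pow_mul, ← pow_add, Nat.mod_add_div]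

lemma map_replacePow_monomial_one (f : R →+* S) (m : σ →₀ ℕ) :
    map f (replacePow d g (monomial m 1)) =
      replacePow d (fun i => map f (g i)) (monomial m 1) := by
  simp [replacePow_monomial_one]

lemma totalDegree_replacePow_monomial_one_le (hg : ∀ i, (g i).totalDegree ≤ d) (m : σ →₀ ℕ) :
    (replacePow d g (monomial m 1)).totalDegree ≤ m.degree := by
  rcases subsingleton_or_nontrivial R with _ | _
  · simp [Subsingleton.elim (replacePow d g (monomial m 1)) 0]
  rw [replacePow_monomial_one, Finsupp.degree_eq_sum]
  refine (totalDegree_finsetProd _ _).trans (Finset.sum_le_sum fun i _ => ?_)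
  calc (X i ^ (m i % d) * g i ^ (m i / d)).totalDegree
      ≤ m i % d + m i / d * (g i).totalDegree :=
        (totalDegree_mul _ _).trans
          (add_le_add (totalDegree_X_pow i _).le (totalDegree_pow _ _))
    _ ≤ m i % d + m i / d * d := by gcongr; exact hg i
    _ = m i := Nat.mod_add_div' _ _

lemma totalDegree_replacePow_le (hg : ∀ i, (g i).totalDegree ≤ d) (q : MvPolynomial σ R) :
    (replacePow d g q).totalDegree ≤ q.totalDegree := by
  rw [q.as_sum, map_sum, ← q.as_sum]
  refine totalDegree_finsetSum_le fun m hm => ?_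
  rw [← mul_one (coeff m q), ← smul_eq_mul, ← smul_monomial, map_smul]
  exact (totalDegree_smul_le _ _).trans <|
    (totalDegree_replacePow_monomial_one_le hg m).trans (le_totalDegree hm)

lemma map_replacePow_span_range_X_pow (hd : 0 < d)
    (hsurj : Function.Surjective (replacePow d g)) :
    ((Ideal.span (Set.range fun i => X i ^ d)).restrictScalars R).map (replacePow d g) =
      (Ideal.span (Set.range g)).restrictScalars R := by
  have hsum (c : σ → MvPolynomial σ R) :
      replacePow d g (∑ i, c i * X i ^ d) = ∑ i, replacePow d g (c i) * g i := by
    simp only [map_sum, mul_comm (c _), replacePow_X_pow_mul hd, mul_comm (g _)]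
  ext q
  simp only [Submodule.mem_map, Submodule.restrictScalars_mem,
    Ideal.mem_span_range_iff_exists_fun]
  constructor
  · rintro ⟨_, ⟨c, rfl⟩, rfl⟩
    exact ⟨_, (hsum c).symm⟩
  · rintro ⟨c, rfl⟩
    choose b hb using fun i => hsurj (c i)
    exact ⟨_, ⟨b, rfl⟩, by simp only [hsum, hb]⟩

/-- The restriction of `replacePow d g` to polynomials of total degree at most `e`. These spaces are
finite-dimensional, so that bijectivity can be tested by determinants. -/
noncomputable def replacePowDegreeLE (hg : ∀ i, (g i).totalDegree ≤ d) (e : ℕ) :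
    restrictTotalDegree σ R e →ₗ[R] restrictTotalDegree σ R e :=
  (replacePow d g).restrict fun q hq => by
    rw [mem_restrictTotalDegree] at hq ⊢
    exact (totalDegree_replacePow_le hg q).trans hq

lemma coe_replacePowDegreeLE_apply (hg : ∀ i, (g i).totalDegree ≤ d) {e : ℕ}
    (q : restrictTotalDegree σ R e) : (replacePowDegreeLE hg e q : MvPolynomial σ R) =
      replacePow d g q :=
  rfl

lemma map_det_replacePowDegreeLE (f : R →+* S) (hg : ∀ i, (g i).totalDegree ≤ d)
    (hfg : ∀ i, (map f (g i)).totalDegree ≤ d) (e : ℕ) :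
    f (replacePowDegreeLE hg e).det = (replacePowDegreeLE hfg e).det := by
  classical
  have : Finite {m : σ →₀ ℕ | (m.sum fun _ k => k) ≤ e} := Finsupp.finite_of_degree_le e
  have := Fintype.ofFinite {m : σ →₀ ℕ | (m.sum fun _ k => k) ≤ e}
  let bR : Module.Basis _ R (restrictTotalDegree σ R e) := basisRestrictSupport R _
  let bS : Module.Basis _ S (restrictTotalDegree σ S e) := basisRestrictSupport S _
  rw [← LinearMap.det_toMatrix bR, ← LinearMap.det_toMatrix bS, f.map_det]
  congr 1
  ext m' m
  rw [RingHom.mapMatrix_apply, Matrix.map_apply, LinearMap.toMatrix_apply, LinearMap.toMatrix_apply]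
  have hbR : (bR m : MvPolynomial σ R) = monomial m.1 1 := coe_basisRestrictSupport_apply _ m
  have hbS : (bS m : MvPolynomial σ S) = monomial m.1 1 := coe_basisRestrictSupport_apply _ m
  calc f (coeff m'.1 (replacePow d g (bR m)))
      = f (coeff m'.1 (replacePow d g (monomial m.1 1))) := by rw [hbR]
    _ = coeff m'.1 (replacePow d (fun i => map f (g i)) (monomial m.1 1)) := by
        rw [← map_replacePow_monomial_one, coeff_map]
    _ = coeff m'.1 (replacePow d (fun i => map f (g i)) (bS m)) := by rw [hbS]

lemma bijective_replacePow_of_det_ne_zero {K : Type*} [Field K] {g : σ → MvPolynomial σ K}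
    (hg : ∀ i, (g i).totalDegree ≤ d) (hdet : ∀ e, (replacePowDegreeLE hg e).det ≠ 0) :
    Function.Bijective (replacePow d g) := by
  have hbij (e : ℕ) : Function.Bijective (replacePowDegreeLE hg e) :=
    (LinearMap.equivOfDetNeZero _ (hdet e)).bijective
  have hmem (q : MvPolynomial σ K) : q ∈ restrictTotalDegree σ K q.totalDegree :=
    (mem_restrictTotalDegree _ _ _).2 le_rfl
  constructor
  · refine (injective_iff_map_eq_zero _).2 fun q hq => ?_
    exact congrArg Subtype.val ((map_eq_zero_iff _ (hbij q.totalDegree).1).1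
      (Subtype.ext hq : replacePowDegreeLE hg _ ⟨q, hmem q⟩ = 0))
  · intro q
    obtain ⟨q', hq'⟩ := (hbij q.totalDegree).2 ⟨q, hmem q⟩
    exact ⟨q', congrArg Subtype.val hq'⟩

variable {K : Type*} [Field K] {p : σ → MvPolynomial σ K}

lemma exists_polynomial_eval_eq_det_replacePowDegreeLE (hp : ∀ i, (p i).totalDegree ≤ d) (e : ℕ) :
    ∃ D : Polynomial K, D ≠ 0 ∧ ∀ t, D.eval t =
      (replacePowDegreeLE (fun i => totalDegree_X_pow_add_C_mul_le (hp i) i t) e).det := by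
  have hG (i : σ) := totalDegree_X_pow_add_C_mul_le
    ((Finset.sup_mono (support_map_subset Polynomial.C (p i))).trans (hp i)) i Polynomial.X
  have hspec (t : K) (i : σ) : map (Polynomial.evalRingHom t)
      (X i ^ d + C Polynomial.X * map Polynomial.C (p i)) = X i ^ d + C t * p i := by
    have : (Polynomial.evalRingHom t).comp Polynomial.C = RingHom.id K := by ext; simp
    simp [map_map, this, map_id]
  have heval (t : K) : (replacePowDegreeLE hG e).det.eval t =
      (replacePowDegreeLE (fun i => totalDegree_X_pow_add_C_mul_le (hp i) i t) e).det := by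
    have := map_det_replacePowDegreeLE (Polynomial.evalRingHom t) hG
      (fun i => (hspec t i).symm ▸ totalDegree_X_pow_add_C_mul_le (hp i) i t) e
    simp only [hspec] at this
    exact this
  refine ⟨(replacePowDegreeLE hG e).det, fun h => ?_, heval⟩
  have hid : replacePowDegreeLE (fun i => totalDegree_X_pow_add_C_mul_le (hp i) i 0) e = .id := by
    refine LinearMap.ext fun q => Subtype.ext ?_
    simp [coe_replacePowDegreeLE_apply, replacePow_X_pow]
  have := heval 0
  rw [h, hid, LinearMap.det_id, Polynomial.eval_zero] at this
  exact zero_ne_one this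

lemma countable_setOf_not_bijective_replacePow (hp : ∀ i, (p i).totalDegree ≤ d) :
    {t : K | ¬ Function.Bijective (replacePow d fun i => X i ^ d + C t * p i)}.Countable := by
  choose D hD_ne hD using exists_polynomial_eval_eq_det_replacePowDegreeLE hp
  refine (Set.countable_iUnion fun e => ((D e).finite_setOfPred_isRoot (hD_ne e)).countable).mono
    fun t ht => ?_
  by_contra hroot
  simp only [Set.mem_iUnion, not_exists] at hroot
  exact ht <| bijective_replacePow_of_det_ne_zero _ fun e h => hroot e ((hD e t).trans h)

lemma exists_forall_eval_eq_zero_of_bijective_replacePow (hd : Odd d)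
    {g : σ → MvPolynomial σ ℝ} (hg : Function.Bijective (replacePow d g)) :
    ∃ x : σ → ℝ, ∀ i, eval x (g i) = 0 := by
  let e := Submodule.Quotient.equiv _ _ (LinearEquiv.ofBijective _ hg)
    (map_replacePow_span_range_X_pow hd.pos hg.2)
  have hrank : Module.finrank ℝ (MvPolynomial σ ℝ ⧸ Ideal.span (Set.range g)) =
      d ^ Fintype.card σ :=
    e.finrank_eq.symm.trans (finrank_quotient_span_range_X_pow (R := ℝ) d)
  obtain ⟨x, hx⟩ := exists_forall_eval_eq_zero_of_odd_finrank _ (hrank ▸ hd.pow)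
  exact ⟨x, fun i => hx _ (Ideal.subset_span ⟨i, rfl⟩)⟩

lemma exists_gt_exists_forall_pow_add_mul_eval_eq_zero {σ : Type*} [Finite σ] {d : ℕ} (hd : Odd d)
    {p : σ → MvPolynomial σ ℝ} (hp : ∀ i, (p i).totalDegree ≤ d) (T : ℝ) :
    ∃ t > T, ∃ x : σ → ℝ, ∀ i, x i ^ d + t * eval x (p i) = 0 := by
  cases nonempty_fintype σ
  obtain ⟨t, ht, htT⟩ := ((countable_setOf_not_bijective_replacePow hp).dense_compl ℝ).exists_gt T
  obtain ⟨x, hx⟩ := exists_forall_eval_eq_zero_of_bijective_replacePow hd (not_not.1 ht)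
  exact ⟨t, htT, x, fun i => by simpa using hx i⟩

end PowerReplacement

section HomogeneousForms

open MvPolynomial

lemma eval_smul_of_isHomogeneous {σ R : Type*} [CommSemiring R] {d : ℕ} {Q : MvPolynomial σ R}
    (hQ : Q.IsHomogeneous d) (s : R) (y : σ → R) : eval (s • y) Q = s ^ d * eval y Q := by
  rw [eval_eq, eval_eq, Finset.mul_sum]
  refine Finset.sum_congr rfl fun m hm => ?_
  simp only [Pi.smul_apply, smul_eq_mul, mul_pow, Finset.prod_mul_distrib,
    Finset.prod_pow_eq_pow_sum, ← hQ.degree_eq_sum_deg_support hm]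
  ring

lemma totalDegree_aeval_le {σ τ R : Type*} [CommSemiring R] {f : σ → MvPolynomial τ R}
    (hf : ∀ i, (f i).totalDegree ≤ 1) (Q : MvPolynomial σ R) :
    (aeval f Q).totalDegree ≤ Q.totalDegree := by
  rw [aeval_def, eval₂_eq]
  refine totalDegree_finsetSum_le fun m hm => ?_
  calc (algebraMap R (MvPolynomial τ R) (coeff m Q) * ∏ i ∈ m.support, f i ^ m i).totalDegree
      ≤ 0 + ∑ i ∈ m.support, m i * (f i).totalDegree := by
        refine (totalDegree_mul _ _).trans (add_le_add (totalDegree_C _).le ?_)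
        exact (totalDegree_finsetProd _ _).trans
          (Finset.sum_le_sum fun i _ => totalDegree_pow _ _)
    _ ≤ ∑ i ∈ m.support, m i := by
        rw [zero_add]
        exact Finset.sum_le_sum fun i _ => mul_le_of_le_one_right (Nat.zero_le _) (hf i)
    _ ≤ Q.totalDegree := le_totalDegree hm

lemma exists_gt_exists_mem_sphere_pow_add_mul_eval_eq_zero {N d : ℕ} (hd : Odd d)
    {Q : Fin N → MvPolynomial (Fin (N + 1)) ℝ} (hQ : ∀ i, (Q i).IsHomogeneous d) (T : ℝ) :
    ∃ t > T, ∃ y ∈ Metric.sphere (0 : EuclideanSpace ℝ (Fin (N + 1))) 1,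
      ∀ i, y i.succ ^ d + t * eval y.ofLp (Q i) = 0 := by
  let f : Fin (N + 1) → MvPolynomial (Fin N) ℝ := Fin.cons 1 X
  have hf (j : Fin (N + 1)) : (f j).totalDegree ≤ 1 := by
    cases j using Fin.cases <;> simp [f]
  obtain ⟨t, ht, x, hx⟩ := exists_gt_exists_forall_pow_add_mul_eval_eq_zero hd
    (p := fun i => aeval f (Q i))
    (fun i => (totalDegree_aeval_le hf _).trans (hQ i).totalDegree_le) T
  let z : EuclideanSpace ℝ (Fin (N + 1)) := WithLp.toLp 2 (Fin.cons 1 x)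
  have hz : z ≠ 0 := fun h => one_ne_zero (congrArg (fun v => v 0) h)
  have hfz : (fun j => eval x (f j)) = z.ofLp := by
    ext j
    cases j using Fin.cases <;> simp [f, z]
  have heval (i : Fin N) : eval x (aeval f (Q i)) = eval z.ofLp (Q i) := by
    rw [← hfz, ← coe_aeval_eq_eval, ← coe_aeval_eq_eval]
    exact comp_aeval_apply f (aeval x) (Q i)
  refine ⟨t, ht, ‖z‖⁻¹ • z, by simp [norm_smul, hz], fun i => ?_⟩
  calc (‖z‖⁻¹ • z) i.succ ^ d + t * eval (‖z‖⁻¹ • z).ofLp (Q i)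
      = ‖z‖⁻¹ ^ d * (x i ^ d + t * eval z.ofLp (Q i)) := by
        rw [WithLp.ofLp_smul, eval_smul_of_isHomogeneous (hQ i), Pi.smul_apply, smul_eq_mul,
          mul_pow]
        simp only [z, Fin.cons_succ]
        ring
    _ = 0 := by rw [← heval, hx, mul_zero]

lemma exists_eq_zero_of_isCompact {X E : Type*} [TopologicalSpace X] [NormedAddCommGroup E]
    {K : Set X} (hK : IsCompact K) {f : X → E} (hf : ContinuousOn f K)
    (h : ∀ ε > 0, ∃ x ∈ K, ‖f x‖ < ε) : ∃ x ∈ K, f x = 0 := by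
  obtain ⟨x₁, hx₁, -⟩ := h 1 one_pos
  obtain ⟨x, hx, hmin⟩ := hK.exists_isMinOn ⟨x₁, hx₁⟩ hf.norm
  refine ⟨x, hx, by_contra fun hne => ?_⟩
  obtain ⟨y, hy, hlt⟩ := h ‖f x‖ (norm_pos_iff.2 hne)
  exact (hmin hy).not_gt hlt

lemma exists_mem_sphere_forall_eval_eq_zero_of_isHomogeneous {N d : ℕ} (hd : Odd d)
    {Q : Fin N → MvPolynomial (Fin (N + 1)) ℝ} (hQ : ∀ i, (Q i).IsHomogeneous d) :
    ∃ y ∈ Metric.sphere (0 : EuclideanSpace ℝ (Fin (N + 1))) 1, ∀ i, eval y.ofLp (Q i) = 0 := by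
  have hcont : Continuous fun (y : EuclideanSpace ℝ (Fin (N + 1))) i => eval y.ofLp (Q i) :=
    continuous_pi fun i => (MvPolynomial.continuous_eval (Q i)).comp (PiLp.continuous_ofLp 2 _)
  refine (exists_eq_zero_of_isCompact (isCompact_sphere _ _) hcont.continuousOn
    fun ε hε => ?_).imp fun y hy => ⟨hy.1, congrFun hy.2⟩
  obtain ⟨t, ht, y, hy, hyt⟩ := exists_gt_exists_mem_sphere_pow_add_mul_eval_eq_zero hd hQ ε⁻¹
  have ht0 : 0 < t := (inv_pos.2 hε).trans ht
  refine ⟨y, hy, (pi_norm_lt_iff hε).2 fun i => ?_⟩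
  have hcoord : ‖y i.succ ^ d‖ ≤ 1 := by
    rw [norm_pow]
    exact pow_le_one₀ (norm_nonneg _)
      ((PiLp.norm_apply_le y _).trans (mem_sphere_zero_iff_norm.1 hy).le)
  calc ‖eval y.ofLp (Q i)‖ = t⁻¹ * ‖t * eval y.ofLp (Q i)‖ := by
        rw [norm_mul, Real.norm_of_nonneg ht0.le, inv_mul_cancel_left₀ ht0.ne']
    _ = t⁻¹ * ‖y i.succ ^ d‖ := by rw [eq_neg_of_add_eq_zero_right (hyt i), norm_neg]
    _ ≤ t⁻¹ * 1 := by gcongr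
    _ < ε := by rw [mul_one]; exact inv_lt_of_inv_lt₀ hε ht

end HomogeneousForms

section BorsukUlam

open MvPolynomial

lemma eval_neg_of_isHomogeneous {σ R : Type*} [CommRing R] {d : ℕ} {Q : MvPolynomial σ R}
    (hQ : Q.IsHomogeneous d) (y : σ → R) : eval (-y) Q = (-1) ^ d * eval y Q := by
  rw [← neg_one_smul R y, eval_smul_of_isHomogeneous hQ]

/- Each odd homogeneous component is raised to degree `d` by a power of `∑ j, X j ^ 2`, which does
not change its values on the unit sphere. -/
lemma exists_isHomogeneous_two_mul_eval_eq_eval_sub_eval_neg {σ R : Type*} [Fintype σ]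
    [CommRing R] {d : ℕ} (hd : Odd d) {q : MvPolynomial σ R} (hq : q.totalDegree ≤ d) :
    ∃ Q : MvPolynomial σ R, Q.IsHomogeneous d ∧
      ∀ y, ∑ j, y j ^ 2 = 1 → 2 * eval y Q = eval y q - eval (-y) q := by
  let r : MvPolynomial σ R := ∑ j, X j ^ 2
  have hr : r.IsHomogeneous 2 := .sum _ _ _ fun j _ => isHomogeneous_X_pow j 2
  refine ⟨∑ k ∈ Finset.range (d + 1) with Odd k,
    homogeneousComponent k q * r ^ ((d - k) / 2), .sum _ _ _ fun k hk => ?_, fun y hy => ?_⟩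
  · obtain ⟨hkd, hk⟩ : k < d + 1 ∧ Odd k := by simpa using hk
    have hdeg : k + 2 * ((d - k) / 2) = d := by
      have := Nat.Odd.sub_odd hd hk
      grind
    simpa only [hdeg] using (homogeneousComponent_isHomogeneous k q).mul (hr.pow ((d - k) / 2))
  have hry : eval y r = 1 := by simp [r, hy]
  have hsum : q = ∑ k ∈ Finset.range (d + 1), homogeneousComponent k q := by
    conv_lhs => rw [← sum_homogeneousComponent q]
    refine Finset.sum_subset (Finset.range_mono (by lia)) fun k _ hk => ?_
    exact homogeneousComponent_eq_zero _ _ (by simpa using hk)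
  calc 2 * eval y (∑ k ∈ Finset.range (d + 1) with Odd k,
        homogeneousComponent k q * r ^ ((d - k) / 2))
      = ∑ k ∈ Finset.range (d + 1) with Odd k, 2 * eval y (homogeneousComponent k q) := by
        simp [Finset.mul_sum, hry]
    _ = ∑ k ∈ Finset.range (d + 1), (eval y (homogeneousComponent k q) -
          eval (-y) (homogeneousComponent k q)) := by
        rw [Finset.sum_filter]
        refine Finset.sum_congr rfl fun k _ => ?_
        rw [eval_neg_of_isHomogeneous (homogeneousComponent_isHomogeneous k q)]
        split_ifs with hk
        · rw [hk.neg_one_pow]; ring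
        · rw [(Nat.not_odd_iff_even.1 hk).neg_one_pow]; ring
    _ = eval y q - eval (-y) q := by
        rw [Finset.sum_sub_distrib, ← map_sum, ← map_sum, ← hsum]

lemma exists_forall_abs_eval_sub_lt {X σ : Type*} [TopologicalSpace X] [CompactSpace X]
    {c : X → σ → ℝ} (hc : Continuous c) (hinj : Function.Injective c) {f : X → ℝ}
    (hf : Continuous f) {ε : ℝ} (hε : 0 < ε) :
    ∃ q : MvPolynomial σ ℝ, ∀ x, |eval (c x) q - f x| < ε := by
  let ev : MvPolynomial σ ℝ →ₐ[ℝ] C(X, ℝ) :=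
    aeval fun j => ⟨fun x => c x j, (continuous_apply j).comp hc⟩
  have hev (q : MvPolynomial σ ℝ) (x : X) : ev q x = eval (c x) q := by
    induction q using MvPolynomial.induction_on with
    | C a => simp [ev]
    | add p q hp hq => simp [hp, hq]
    | mul_X p j hp => simp [hp, ev]
  have hsep : ev.range.SeparatesPoints := fun x y hxy => by
    obtain ⟨j, hj⟩ := Function.ne_iff.1 (hinj.ne hxy)
    exact ⟨_, ⟨ev (MvPolynomial.X j), ⟨_, rfl⟩, rfl⟩, by simpa only [hev, eval_X] using hj⟩
  obtain ⟨⟨_, q, rfl⟩, hq⟩ :=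
    ContinuousMap.exists_mem_subalgebra_near_continuous_of_separatesPoints ev.range hsep f hf ε hε
  exact ⟨q, fun x => hev q x ▸ hq x⟩

theorem borsuk_ulam {N : ℕ} {F : EuclideanSpace ℝ (Fin (N + 1)) → Fin N → ℝ}
    (hF : ContinuousOn F (Metric.sphere 0 1)) (hodd : ∀ x ∈ Metric.sphere 0 1, F (-x) = -F x) :
    ∃ x ∈ Metric.sphere 0 1, F x = 0 := by
  refine exists_eq_zero_of_isCompact (isCompact_sphere _ _) hF fun ε hε => ?_
  have : CompactSpace (Metric.sphere (0 : EuclideanSpace ℝ (Fin (N + 1))) 1) :=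
    isCompact_iff_compactSpace.1 (isCompact_sphere _ _)
  choose q hq using fun i => exists_forall_abs_eval_sub_lt
    ((PiLp.continuous_ofLp 2 _).comp continuous_subtype_val)
    ((WithLp.ofLp_injective 2).comp Subtype.val_injective)
    ((continuous_apply i).comp (continuousOn_iff_continuous_domRestrict.1 hF)) hε
  have hdeg (i : Fin N) : (q i).totalDegree ≤ 2 * ∑ i, (q i).totalDegree + 1 := by
    have := Finset.single_le_sum_of_canonicallyOrdered (f := fun i => (q i).totalDegree)
      (Finset.mem_univ i)
    lia
  choose Q hQ hQq using fun i =>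
    exists_isHomogeneous_two_mul_eval_eq_eval_sub_eval_neg (odd_two_mul_add_one _) (hdeg i)
  obtain ⟨y, hy, hy0⟩ :=
    exists_mem_sphere_forall_eval_eq_zero_of_isHomogeneous (odd_two_mul_add_one _) hQ
  refine ⟨y, hy, (pi_norm_lt_iff hε).2 fun i => ?_⟩
  have hsq : ∑ j, y j ^ 2 = 1 := by
    rw [← EuclideanSpace.real_norm_sq_eq, mem_sphere_zero_iff_norm.1 hy, one_pow]
  have hsymm : eval y.ofLp (q i) = eval (-y).ofLp (q i) := by
    have := hQq i _ hsq
    rwa [hy0, mul_zero, eq_comm, sub_eq_zero] at this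
  have hpos : |eval y.ofLp (q i) - F y i| < ε := hq i ⟨y, hy⟩
  have hneg : |eval y.ofLp (q i) + F y i| < ε := by
    have : |eval (-y).ofLp (q i) - F (-y) i| < ε := hq i ⟨-y, by simpa using hy⟩
    rwa [← hsymm, hodd y hy, Pi.neg_apply, sub_neg_eq_add] at this
  rw [Real.norm_eq_abs, abs_lt]
  rw [abs_lt] at hpos hneg
  constructor <;> linarith

end BorsukUlam

section HamSandwich

lemma continuousAt_measureReal_setOf_pos {X Y : Type*} [MeasurableSpace X] [TopologicalSpace Y]
    [FirstCountableTopology Y] {μ : Measure X} [IsFiniteMeasure μ] {g : Y → X → ℝ} {y₀ : Y}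
    (hmeas : ∀ y, Measurable (g y)) (hcont : ∀ x, ContinuousAt (fun y => g y x) y₀)
    (hne : ∀ᵐ x ∂μ, g y₀ x ≠ 0) : ContinuousAt (fun y => μ.real {x | 0 < g y x}) y₀ := by
  have hset (y : Y) : MeasurableSet {x | 0 < g y x} := measurableSet_lt measurable_const (hmeas y)
  refine (ENNReal.tendsto_toReal (measure_ne_top _ _)).comp <|
    tendsto_measure_of_ae_tendsto_indicator_of_isFiniteMeasure _ (hset y₀) hset ?_
  filter_upwards [hne] with x hx
  rcases hx.lt_or_gt with hneg | hpos
  · filter_upwards [(hcont x).eventually_lt_const hneg] with y hy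
    exact iff_of_false hy.not_gt hneg.not_gt
  · filter_upwards [(hcont x).eventually_const_lt hpos] with y hy
    exact iff_of_true hy hpos

theorem exists_ne_zero_forall_measure_setOf_pos_eq {X V : Type*} [MeasurableSpace X]
    [AddCommGroup V] [Module ℝ V] {N : ℕ} (hN : N < Module.finrank ℝ V) {T : V →ₗ[ℝ] X → ℝ}
    (hT : ∀ v, Measurable (T v)) (μ : Fin N → Measure X) [∀ i, IsFiniteMeasure (μ i)]
    (hne : ∀ i, ∀ v ≠ 0, ∀ᵐ x ∂μ i, T v x ≠ 0) :
    ∃ v ≠ 0, ∀ i, μ i {x | 0 < T v x} = μ i {x | T v x < 0} := by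
  obtain ⟨b, hb⟩ := exists_linearIndependent_of_le_finrank (R := ℝ) (M := V) hN
  let L : EuclideanSpace ℝ (Fin (N + 1)) →ₗ[ℝ] V :=
    Fintype.linearCombination ℝ b ∘ₗ (WithLp.linearEquiv 2 ℝ (Fin (N + 1) → ℝ)).toLinearMap
  have hL : Function.Injective L :=
    hb.fintypeLinearCombination_injective.comp (WithLp.linearEquiv 2 ℝ _).injective
  have hL_ne {y} (hy : y ∈ Metric.sphere 0 1) : L y ≠ 0 :=
    (map_ne_zero_iff L hL).2 (ne_zero_of_mem_unit_sphere ⟨y, hy⟩)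
  have hcont (x : X) : Continuous fun y => T (L y) x :=
    (LinearMap.proj x ∘ₗ T ∘ₗ L).continuous_of_finiteDimensional
  let F (y : EuclideanSpace ℝ (Fin (N + 1))) (i : Fin N) : ℝ :=
    (μ i).real {x | 0 < T (L y) x} - (μ i).real {x | 0 < -T (L y) x}
  have hF : ContinuousOn F (Metric.sphere 0 1) := fun y hy =>
    (continuousAt_pi.2 fun i => ContinuousAt.sub
      (continuousAt_measureReal_setOf_pos (fun y => hT _) (fun x => (hcont x).continuousAt)
        (hne i _ (hL_ne hy)))
      (continuousAt_measureReal_setOf_pos (fun y => (hT _).neg)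
        (fun x => (hcont x).neg.continuousAt)
        ((hne i _ (hL_ne hy)).mono fun x => neg_ne_zero.2))).continuousWithinAt
  obtain ⟨y, hy, hy0⟩ := borsuk_ulam hF fun y _ => by ext i; simp [F]
  refine ⟨L y, hL_ne hy, fun i => ?_⟩
  have hi := sub_eq_zero.1 (congrFun hy0 i)
  simp only [neg_pos] at hi
  exact (measureReal_eq_measureReal_iff).1 hi

end HamSandwich

section ZeroSets

open MvPolynomial

lemma finite_setOf_eval_cons_eq_zero {R : Type*} [CommRing R] [IsDomain R] {n : ℕ}
    {P : MvPolynomial (Fin (n + 1)) R} {y : Fin n → R}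
    (hy : eval y (finSuccEquiv R n P).leadingCoeff ≠ 0) :
    {s : R | eval (Fin.cons s y : Fin (n + 1) → R) P = 0}.Finite := by
  have hne : (finSuccEquiv R n P).map (eval y) ≠ 0 := fun h =>
    hy (by simpa using congrArg (fun f => f.coeff (finSuccEquiv R n P).natDegree) h)
  simp only [eval_eq_eval_mv_eval']
  exact Polynomial.finite_setOfPred_isRoot hne

lemma ae_eval_ne_zero {n : ℕ} (μ : Fin n → Measure ℝ) [∀ i, SigmaFinite (μ i)]
    [∀ i, NullSingletonClass (μ i)] {P : MvPolynomial (Fin n) ℝ} (hP : P ≠ 0) :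
    ∀ᵐ x ∂Measure.pi μ, eval x P ≠ 0 := by
  induction n with
  | zero =>
    obtain ⟨a, rfl⟩ := C_surjective (Fin 0) P
    exact .of_forall fun x => by simpa using hP
  | succ n ih =>
    let Q := finSuccEquiv ℝ n P
    have hQ : Q.leadingCoeff ≠ 0 := by simpa [Q] using hP
    have hcont : Continuous fun z : ℝ × (Fin n → ℝ) =>
        eval (Fin.cons z.1 z.2 : Fin (n + 1) → ℝ) P :=
      (MvPolynomial.continuous_eval P).comp 
        (continuous_fst.finCons (A := fun _ => ℝ) continuous_snd)
    have hmeas : MeasurableSet {z : ℝ × (Fin n → ℝ) |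
        eval (Fin.cons z.1 z.2 : Fin (n + 1) → ℝ) P ≠ 0} :=
      (isOpen_ne_fun hcont continuous_const).measurableSet
    have hprod : ∀ᵐ z ∂(μ 0).prod (Measure.pi fun i => μ (Fin.succ i)),
        eval (Fin.cons z.1 z.2 : Fin (n + 1) → ℝ) P ≠ 0 := by
      rw [Measure.ae_prod_iff_ae_ae hmeas, Measure.ae_ae_comm hmeas]
      filter_upwards [ih (fun i => μ (Fin.succ i)) hQ] with y hy
      exact (finite_setOf_eval_cons_eq_zero hy).countable.ae_notMem (μ 0)
    filter_upwards [(measurePreserving_piFinSuccAbove μ 0).quasiMeasurePreserving.ae hprod]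
      with x hx
    rwa [← Fin.cons_self_tail x]

lemma ae_eval_ofLp_ne_zero {n : ℕ} {P : MvPolynomial (Fin n) ℝ} (hP : P ≠ 0) :
    ∀ᵐ x : EuclideanSpace ℝ (Fin n), eval x.ofLp P ≠ 0 :=
  (EuclideanSpace.volume_preserving_symm_measurableEquiv_toLp (Fin n)).quasiMeasurePreserving.ae
    (ae_eval_ne_zero (fun _ => volume) hP)

end ZeroSets

theorem polynomial_ham_sandwich_general {n d N : ℕ} (hN : N < (n + d).choose d)
    (μ : Fin N → Measure (EuclideanSpace ℝ (Fin n))) [∀ i, IsFiniteMeasure (μ i)]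
    (hμ : ∀ i, μ i ≪ volume) :
    ∃ P : MvPolynomial (Fin n) ℝ, P ≠ 0 ∧ P.totalDegree ≤ d ∧
      ∀ i, μ i {x | 0 < MvPolynomial.eval (fun j => x j) P}
          = μ i {x | MvPolynomial.eval (fun j => x j) P < 0} := by
  let V := MvPolynomial.restrictTotalDegree (Fin n) ℝ d
  let T : V →ₗ[ℝ] EuclideanSpace ℝ (Fin n) → ℝ :=
    LinearMap.pi (fun x => (MvPolynomial.aeval x.ofLp).toLinearMap) ∘ₗ V.subtype
  have hT (P : V) : T P = fun x => MvPolynomial.eval x.ofLp P.1 := by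
    ext x
    simp [T]
  obtain ⟨P, hP, hbisect⟩ := exists_ne_zero_forall_measure_setOf_pos_eq (T := T)
    (by rwa [finrank_restrictTotalDegree, Fintype.card_fin])
    (fun P => by
      rw [hT]
      exact ((MvPolynomial.continuous_eval P.1).comp (PiLp.continuous_ofLp 2 _)).measurable) μ
    fun i P hP => by
      rw [hT]
      exact (hμ i).ae_le (ae_eval_ofLp_ne_zero (Subtype.coe_ne_coe.2 hP))
  exact ⟨P, Subtype.coe_ne_coe.2 hP, (MvPolynomial.mem_restrictTotalDegree _ _ _).1 P.2,
    fun i => by simpa only [hT] using hbisect i⟩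

/-- **Polynomial ham sandwich theorem (Stone–Tukey).** Given `N = C(n+d, d) - 1` finite-volume
open sets in `ℝ^n`, there is a nonzero polynomial of degree at most `d` bisecting each of them. -/
theorem polynomial_ham_sandwich (n d : ℕ) (hn : 1 ≤ n) (hd : 1 ≤ d)
    (U : Fin ((n + d).choose d - 1) → Set (EuclideanSpace ℝ (Fin n)))
    (hUopen : ∀ i, IsOpen (U i)) (hUvol : ∀ i, volume (U i) < ⊤) :
    ∃ P : MvPolynomial (Fin n) ℝ, P ≠ 0 ∧ P.totalDegree ≤ d ∧
      ∀ i, volume {x ∈ U i | 0 < MvPolynomial.eval (fun j => x j) P}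
          = volume {x ∈ U i | MvPolynomial.eval (fun j => x j) P < 0} := by
  have hfin (i) : IsFiniteMeasure (volume.restrict (U i)) :=
    isFiniteMeasure_restrict.2 (hUvol i).ne
  obtain ⟨P, hP, hdeg, hbisect⟩ := polynomial_ham_sandwich_general
    (Nat.sub_one_lt (Nat.choose_pos (Nat.le_add_left d n)).ne') (fun i => volume.restrict (U i))
    fun i => Measure.absolutelyContinuous_restrict
  refine ⟨P, hP, hdeg, fun i => ?_⟩
  simpa only [Measure.restrict_apply' (hUopen i).measurableSet, Set.inter_def, Set.mem_ofPred_eq,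
    and_comm] using hbisect i
end
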